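/- arXiv:math/0608759 — 2 statements merged into one kernel-verified Lean document; each statement's English description precedes it below -/
import Mathlib

section
/- Let F : T → T be a polynomial-like branched covering of a simplicial tree, and let J(F) = ∂T ∖ {∞} carry the subspace topology from the space of ends ∂T. Then there exists a unique Borel probability measure μ_F on J(F) such that μ_F(J(F,v)) = μ(v) for every vertex v, where J(F,v) is the set of ends below v and μ is the mass function. Moreover μ_F is invariant under the induced boundary map F : J(F) → J(F) (i.e., μ_F(F^{−1}(A)) = μ_F(A) for every Borel set A), and μ_F has no atoms. -/
open SimpleGraph Function Opposite

/-- A locally finite simplicial tree together with a self-map that is a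
branched covering: a simplicial map (edges map onto edges) such that the
induced map on edges adjacent to any vertex is surjective onto the edges
adjacent to the image vertex, and every vertex has finitely many preimages. -/
structure TreeDyn (V : Type) where
  G : SimpleGraph V
  isTree : G.IsTree
  locFin : ∀ v : V, (G.neighborSet v).Finite
  F : V → V
  adjMap : ∀ ⦃v w : V⦄, G.Adj v w → G.Adj (F v) (F w)
  edgeSurj : ∀ ⦃v w' : V⦄, G.Adj (F v) w' → ∃ w : V, G.Adj v w ∧ F w = w'
  finFibers : ∀ v' : V, {v : V | F v = v'}.Finite

namespace TreeDyn

variable {V : Type}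

/-- A local degree function for the branched covering `T.F`: positive on
vertices and edges (edges adjacent to `v` are recorded by their other
endpoint), symmetric on edges, satisfying the Riemann–Hurwitz style
inequality `2 deg(v) - 2 ≥ Σ (deg e - 1)` at each vertex, and the local
equality `deg v = Σ {deg e' : e' adjacent to v, F(e') = F(e)}` for each
edge `e` adjacent to `v`. -/
def IsLocalDeg (T : TreeDyn V) (dV : V → ℕ) (dE : V → V → ℕ) : Prop :=
  (∀ v w : V, dE v w = dE w v) ∧
  (∀ v : V, 0 < dV v) ∧
  (∀ ⦃v w : V⦄, T.G.Adj v w → 0 < dE v w) ∧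
  (∀ v : V, (∑ᶠ w ∈ T.G.neighborSet v, (dE v w - 1)) + 2 ≤ 2 * dV v) ∧
  (∀ ⦃v w : V⦄, T.G.Adj v w →
    dV v = ∑ᶠ w' ∈ {w' : V | T.G.Adj v w' ∧ T.F w' = T.F w}, dE v w')

/-- `x` and `y` are in the same grand orbit if `F^[n] x = F^[m] y` for some `n, m > 0`. -/
def GrandOrbit (T : TreeDyn V) (x y : V) : Prop :=
  ∃ n m : ℕ, 0 < n ∧ 0 < m ∧ T.F^[n] x = T.F^[m] y

end TreeDyn

/-- The natural topology on the space of ends of a graph: the subspace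
topology induced from the product of the (discrete) spaces of components
of complements of finite sets. -/
def endTop {V : Type} (G : SimpleGraph V) : TopologicalSpace G.end :=
  TopologicalSpace.induced Subtype.val
    (⨅ K : (Finset V)ᵒᵖ, TopologicalSpace.induced (fun f => f K) ⊥)

/-- An end is isolated if it is an isolated point of the space of ends. -/
def IsIsolatedEnd {V : Type} (G : SimpleGraph V) (e : G.end) : Prop :=
  @IsOpen G.end (endTop G) {e}

namespace TreeDyn

variable {V : Type}

/-- `T` is polynomial-like with distinguished end `infty`:
(II) a local degree function exists, (I) `infty` is the unique isolated end,
(III) no vertex has valence one, and (IV) the grand orbit of every vertex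
contains a vertex of valence at least three. -/
def IsPolyLike (T : TreeDyn V) (infty : T.G.end) : Prop :=
  (∃ dV dE, T.IsLocalDeg dV dE) ∧
  IsIsolatedEnd T.G infty ∧
  (∀ e : T.G.end, IsIsolatedEnd T.G e → e = infty) ∧
  (∀ v : V, (T.G.neighborSet v).ncard ≠ 1) ∧
  (∀ v : V, ∃ w : V, T.GrandOrbit v w ∧ 3 ≤ (T.G.neighborSet w).ncard)

/-- The vertex `x` lies below the vertex `v` (the path from `x` to the
end `infty` passes through `v`): either `x = v`, or `x` and `infty`
determine different components of the complement of `{v}`. -/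
def Below (T : TreeDyn V) (infty : T.G.end) (v x : V) : Prop :=
  x = v ∨ ∃ h : x ∉ (({v} : Finset V) : Set V),
    T.G.componentComplMk h ≠ infty.val (op ({v} : Finset V))

/-- The end `p` lies below the vertex `v` (the path from `p` to `infty`
passes through `v`). -/
def EndBelow (T : TreeDyn V) (infty : T.G.end) (v : V) (p : T.G.end) : Prop :=
  p.val (op ({v} : Finset V)) ≠ infty.val (op ({v} : Finset V))

/-- `v₀` is the base of the tree: the vertex of valence ≥ 3 closest to
`infty`, i.e. every vertex of valence ≥ 3 lies below it. -/
def IsBase (T : TreeDyn V) (infty : T.G.end) (v₀ : V) : Prop :=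
  3 ≤ (T.G.neighborSet v₀).ncard ∧
  ∀ w : V, 3 ≤ (T.G.neighborSet w).ncard → T.Below infty v₀ w

open Classical in
/-- The combinatorial height relative to the base `v₀`: `|h v|` is the
graph distance to `v₀`, with `h v ≥ 0` exactly when `v` lies on the ray
from `v₀` to `infty` (i.e. `v₀` lies below `v`). -/
noncomputable def height (T : TreeDyn V) (infty : T.G.end) (v₀ : V) (v : V) : ℤ :=
  if T.Below infty v v₀ then (T.G.dist v₀ v : ℤ) else -(T.G.dist v₀ v : ℤ)

/-- `Dg` is the global degree of `T.F`: for every edge `{v,w}`, the sum of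
the degrees of the edges mapping onto it equals `Dg`. -/
def IsGlobalDeg (T : TreeDyn V) (dE : V → V → ℕ) (Dg : ℕ) : Prop :=
  ∀ ⦃v w : V⦄, T.G.Adj v w →
    Dg = ∑ᶠ a ∈ {a : V | T.F a = v}, ∑ᶠ b ∈ {b : V | T.G.Adj a b ∧ T.F b = w}, dE a b

/-- The critical multiplicity of a vertex. -/
noncomputable def multV (T : TreeDyn V) (dV : V → ℕ) (dE : V → V → ℕ) (v : V) : ℕ :=
  2 * dV v - 2 - ∑ᶠ w ∈ T.G.neighborSet v, (dE v w - 1)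

/-- The critical multiplicity of an end `p ≠ infty`: the limiting
(= minimal) value of `dV` along the path from `infty` to `p`, minus one. -/
noncomputable def multEnd (T : TreeDyn V) (infty : T.G.end) (dV : V → ℕ) (p : T.G.end) : ℕ :=
  sInf {d : ℕ | ∃ v : V, T.EndBelow infty v p ∧ dV v = d} - 1

/-- `μ` is the mass function: `μ v = 1` for `h(v) ≥ 0` and
`μ(F v) = (deg F / deg v) · μ v`. -/
def IsMass (T : TreeDyn V) (infty : T.G.end) (v₀ : V) (dV : V → ℕ) (Dg : ℕ)
    (μ : V → ℚ) : Prop :=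
  (∀ v : V, 0 ≤ T.height infty v₀ v → μ v = 1) ∧
  (∀ v : V, μ (T.F v) = ((Dg : ℚ) / (dV v : ℚ)) * μ v)

end TreeDyn

/-- The Julia set of `T`: the set of ends other than `infty`. -/
def JSet {V : Type} (T : TreeDyn V) (infty : T.G.end) : Type :=
  {p : T.G.end // p ≠ infty}

/-- The topology on the Julia set, induced from the topology on ends. -/
noncomputable def JTop {V : Type} (T : TreeDyn V) (infty : T.G.end) :
    TopologicalSpace (JSet T infty) :=
  TopologicalSpace.induced Subtype.val (endTop T.G)

/-- The Borel σ-algebra on the Julia set. -/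
noncomputable def JBorel {V : Type} (T : TreeDyn V) (infty : T.G.end) :
    MeasurableSpace (JSet T infty) :=
  @borel (JSet T infty) (JTop T infty)

namespace SimpleGraph

variable {V : Type} {G : SimpleGraph V}

/-- The component of the complement of the finite set `K` containing the end `p`. -/
def endComp (p : G.end) (K : Finset V) : G.ComponentCompl (K : Set V) := p.val (op K)

theorem mem_endComp_of_subset {p : G.end} {K L : Finset V} (h : K ⊆ L) {y : V}
    (hy : y ∈ endComp p L) : y ∈ endComp p K := by
  obtain ⟨hyL, hyC⟩ := hy
  exact ⟨_, (G.end_hom_mk_of_mk p.2 (CategoryTheory.opHomOfLE h) hyL hyC.symm).symm⟩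

theorem exists_mem_endComp (p : G.end) (K : Finset V) : ∃ y, y ∈ endComp p K :=
  (endComp p K).nonempty

theorem ComponentCompl.eq_of_mem {K : Set V} {C D : G.ComponentCompl K} {y : V}
    (hC : y ∈ C) (hD : y ∈ D) : C = D :=
  hC.choose_spec.symm.trans hD.choose_spec

theorem ComponentCompl.mem_of_walk {K : Set V} {C : G.ComponentCompl K} {x y : V}
    (p : G.Walk x y) (hp : ∀ z ∈ p.support, z ∉ K) (hx : x ∈ C) : y ∈ C := by
  induction p with
  | nil => exact hx
  | cons h q ih =>
    refine ih (fun z hz => hp z (by simp [hz])) ?_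
    exact ComponentCompl.mem_of_adj _ _ hx (hp _ (by simp)) h

theorem ComponentCompl.exists_path {K : Set V} {C : G.ComponentCompl K} {x y : V}
    (hx : x ∈ C) (hy : y ∈ C) :
    ∃ p : G.Walk x y, p.IsPath ∧ ∀ z ∈ p.support, z ∉ K := by
  classical
  obtain ⟨hxK, hxC⟩ := hx
  obtain ⟨hyK, hyC⟩ := hy
  obtain ⟨q⟩ := ConnectedComponent.eq.1 (hxC.trans hyC.symm)
  let r : G.Walk x y := q.map (Embedding.induce (G := G) Kᶜ).toHom
  refine ⟨r.bypass, r.bypass_isPath, fun z hz => ?_⟩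
  have hz' : z ∈ (q.map (Embedding.induce (G := G) Kᶜ).toHom).support := r.support_bypass_subset_support hz
  rw [Walk.support_map, List.mem_map] at hz'
  obtain ⟨a, -, rfl⟩ := hz'
  exact a.2

theorem IsTree.eq_of_adj_of_mem (hG : G.IsTree) {v u w : V} {C : G.ComponentCompl {v}}
    (hu : G.Adj v u) (hw : G.Adj v w) (huC : u ∈ C) (hwC : w ∈ C) : u = w := by
  obtain ⟨p, hp, hpK⟩ := ComponentCompl.exists_path huC hwC
  have hp' : (Walk.cons hu p).IsPath :=
    hp.cons fun h => hpK v h rfl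
  have h := (hG.existsUnique_path v w).unique hp' (Walk.IsPath.of_adj hw)
  have h2 := congrArg Walk.support h
  simp only [Walk.support_cons, Adj.toWalk, Walk.support_nil, List.cons.injEq, true_and] at h2
  have : u ∈ p.support := p.start_mem_support
  rw [h2] at this
  simpa using this

end SimpleGraph

namespace TreeDyn

variable {V : Type} (T : TreeDyn V) (infty : T.G.end)

theorem exists_adj_mem_endComp (v : V) :
    ∃ u, T.G.Adj v u ∧ u ∈ endComp infty {v} := by
  obtain ⟨⟨c, k⟩, hc, hk, hck⟩ := ComponentCompl.exists_adj_boundary_pair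
    T.isTree.connected.preconnected (K := ((({v} : Finset V)) : Set V)) (by simp)
    (endComp infty {v})
  obtain rfl : k = v := by simpa using hk
  exact ⟨c, hck.symm, hc⟩

/-- The neighbour of `v` in the direction of the end `infty`. -/
noncomputable def up (v : V) : V := (T.exists_adj_mem_endComp infty v).choose

theorem adj_up (v : V) : T.G.Adj v (T.up infty v) :=
  (T.exists_adj_mem_endComp infty v).choose_spec.1

theorem up_mem_endComp (v : V) : T.up infty v ∈ endComp infty {v} :=
  (T.exists_adj_mem_endComp infty v).choose_spec.2

theorem eq_up_of_mem {v u : V} (h : T.G.Adj v u) (hu : u ∈ endComp infty {v}) :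
    u = T.up infty v := by
  generalize hC : endComp infty {v} = C at hu
  have h2 := T.up_mem_endComp infty v
  rw [hC] at h2
  clear hC
  revert C
  rw [Finset.coe_singleton]
  intro C hu h2
  exact T.isTree.eq_of_adj_of_mem h (T.adj_up infty v) hu h2

theorem up_up_ne (v : V) : T.up infty (T.up infty v) ≠ v := by
  classical
  intro h
  set u := T.up infty v with hu
  have hvu : T.G.Adj v u := T.adj_up infty v
  obtain ⟨x, hx⟩ := exists_mem_endComp infty ({u, v} : Finset V)
  have hxv : x ∈ endComp infty {v} := mem_endComp_of_subset (by simp) hx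
  have hxu : x ∈ endComp infty {u} := mem_endComp_of_subset (by simp) hx
  obtain ⟨p, hp, hpv⟩ := ComponentCompl.exists_path hxv (T.up_mem_endComp infty v)
  obtain ⟨q, -, hqu⟩ := ComponentCompl.exists_path hxu (h ▸ T.up_mem_endComp infty u)
  have h1 : (p.concat hvu.symm).IsPath := hp.concat (fun h => hpv v h (by simp)) hvu.symm
  have h2 := (T.isTree.existsUnique_path x v).unique h1 q.bypass_isPath
  have h3 : u ∈ q.bypass.support := by
    rw [← h2]
    simp [Walk.support_concat, hu]
  exact hqu u (q.support_bypass_subset_support h3) (by simp)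

theorem eq_up_or_eq_up {v w : V} (h : T.G.Adj v w) :
    w = T.up infty v ∨ v = T.up infty w := by
  classical
  obtain ⟨x, hx⟩ := exists_mem_endComp infty ({v, w} : Finset V)
  have hxv : x ∈ endComp infty {v} := mem_endComp_of_subset (by simp) hx
  have hxw : x ∈ endComp infty {w} := mem_endComp_of_subset (by simp) hx
  obtain ⟨p, hp, -⟩ := T.isTree.existsUnique_path x v
  by_cases hw : w ∈ p.support
  · left
    refine T.eq_up_of_mem infty h (ComponentCompl.mem_of_walk (p.takeUntil w hw) ?_ hxv)
    intro z hz hzv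
    obtain rfl : z = v := by simpa using hzv
    exact p.endpoint_notMem_support_takeUntil hp hw h.ne hz
  · right
    refine T.eq_up_of_mem infty h.symm (ComponentCompl.mem_of_walk p ?_ hxw)
    intro z hz hzv
    obtain rfl : z = w := by simpa using hzv
    exact hw hz

theorem adj_iff {v w : V} : T.G.Adj v w ↔ w = T.up infty v ∨ v = T.up infty w := by
  refine ⟨T.eq_up_or_eq_up infty, ?_⟩
  rintro (rfl | rfl)
  · exact T.adj_up infty v
  · exact (T.adj_up infty w).symm

theorem iterate_up_mem_endComp (v : V) (n : ℕ) :
    (T.up infty)^[n + 1] v ∈ endComp infty {v} := by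
  induction n with
  | zero => exact T.up_mem_endComp infty v
  | succ n ih =>
    rw [iterate_succ_apply']
    set u := (T.up infty)^[n + 1] v
    refine ComponentCompl.mem_of_adj u _ ih ?_ (T.adj_up infty u)
    intro hv
    have hv : T.up infty u = v := by simpa using hv
    have hadj : T.G.Adj v u := by rw [← hv]; exact (T.adj_up infty u).symm
    have := T.eq_up_of_mem infty hadj ih
    rw [this] at hv
    exact T.up_up_ne infty v hv

theorem iterate_up_ne (v : V) (n : ℕ) : (T.up infty)^[n + 1] v ≠ v := by
  intro h
  have := ComponentCompl.notMem_of_mem (T.iterate_up_mem_endComp infty v n)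
  simp [h] at this

theorem iterate_up_inj {v : V} {m n : ℕ}
    (h : (T.up infty)^[m] v = (T.up infty)^[n] v) : m = n := by
  wlog hmn : m ≤ n generalizing m n
  · exact (this h.symm (by omega)).symm
  obtain ⟨k, rfl⟩ := Nat.exists_eq_add_of_le hmn
  rw [Nat.add_comm, iterate_add_apply] at h
  rcases k with _ | k
  · simp
  · exact absurd h.symm (T.iterate_up_ne infty _ k)

theorem exists_iterate_up_eq (v w : V) :
    ∃ m n, (T.up infty)^[m] v = (T.up infty)^[n] w := by
  obtain ⟨p⟩ := T.isTree.connected.preconnected v w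
  induction p with
  | nil => exact ⟨0, 0, rfl⟩
  | cons h _ ih =>
    obtain ⟨m, n, e⟩ := ih
    rcases T.eq_up_or_eq_up infty h with rfl | rfl
    · exact ⟨m + 1, n, by rw [iterate_succ_apply, e]⟩
    · exact ⟨m, n + 1, by
        rw [iterate_succ_apply', ← e, ← iterate_succ_apply' (T.up infty), iterate_succ_apply]⟩

/-- `x` lies on the descending side of `v`: iterating `up` from `x` leads to `v`. -/
def Under (v x : V) : Prop := ∃ n, (T.up infty)^[n] x = v

variable {T infty}

theorem Under.refl (v : V) : T.Under infty v v := ⟨0, rfl⟩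

theorem Under.trans {u v x : V} (h : T.Under infty u v) (h' : T.Under infty v x) :
    T.Under infty u x := by
  obtain ⟨n, rfl⟩ := h
  obtain ⟨m, rfl⟩ := h'
  exact ⟨n + m, iterate_add_apply ..⟩

theorem Under.of_up {v x : V} (h : T.Under infty v (T.up infty x)) : T.Under infty v x := by
  obtain ⟨n, hn⟩ := h
  exact ⟨n + 1, hn⟩

theorem Under.of_ne {v x : V} (h : T.Under infty v x) (hne : x ≠ v) :
    T.Under infty v (T.up infty x) := by
  obtain ⟨n, hn⟩ := h
  rcases n with _ | n
  · exact absurd hn hne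
  · exact ⟨n, hn⟩

theorem Under.total {v w x : V} (hv : T.Under infty v x) (hw : T.Under infty w x) :
    T.Under infty v w ∨ T.Under infty w v := by
  obtain ⟨m, rfl⟩ := hv
  obtain ⟨n, rfl⟩ := hw
  rcases le_total m n with h | h
  · obtain ⟨k, rfl⟩ := Nat.exists_eq_add_of_le h
    exact Or.inr ⟨k, by rw [Nat.add_comm, iterate_add_apply]⟩
  · obtain ⟨k, rfl⟩ := Nat.exists_eq_add_of_le h
    exact Or.inl ⟨k, by rw [Nat.add_comm, iterate_add_apply]⟩

theorem Under.exists_of_ne {v x : V} (h : T.Under infty v x) (hne : x ≠ v) :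
    ∃ c, T.up infty c = v ∧ T.Under infty c x := by
  obtain ⟨n, hn⟩ := h
  rcases n with _ | n
  · exact absurd hn hne
  · exact ⟨_, by rw [← iterate_succ_apply' (T.up infty), hn], n, rfl⟩

theorem not_under_up (v : V) : ¬ T.Under infty v (T.up infty v) := by
  rintro ⟨n, hn⟩
  exact T.iterate_up_ne infty v n hn

/-- The vertices under `v` are closed under adjacency in the complement of `v`. -/
theorem Under.of_mem {v x y : V} {C : T.G.ComponentCompl ({v} : Finset V)} (hx : x ∈ C)
    (hy : y ∈ C) (h : T.Under infty v x) : T.Under infty v y := by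
  obtain ⟨p, -, hp⟩ := ComponentCompl.exists_path hx hy
  clear hx hy
  induction p with
  | nil => exact h
  | cons hadj q ih =>
    refine ih ?_ fun z hz => hp z (by simp [hz])
    rcases T.eq_up_or_eq_up infty hadj with rfl | rfl
    · exact h.of_ne (by simpa using hp _ (by simp))
    · exact h.of_up

theorem mem_of_not_under {K : Finset V} {C : T.G.ComponentCompl (K : Set V)} {v x : V} (n : ℕ)
    (hK : ∀ k ∈ K, T.Under infty v k) (hx : ¬ T.Under infty v x) :
    (T.up infty)^[n] x ∈ C ↔ x ∈ C := by
  induction n generalizing x with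
  | zero => rfl
  | succ n ih =>
    have hx' : ¬ T.Under infty v (T.up infty x) := fun h => hx h.of_up
    rw [iterate_succ_apply, ih hx']
    constructor
    · exact fun h => ComponentCompl.mem_of_adj _ _ h (fun hk => hx (hK x hk)) (T.adj_up infty x).symm
    · exact fun h => ComponentCompl.mem_of_adj _ _ h (fun hk => hx' (hK _ hk)) (T.adj_up infty x)

/-- Two vertices that are not under `v` lie in the same component of the complement of any
finite set of vertices under `v`. -/
theorem mem_of_not_under_of_not_under {K : Finset V} {C : T.G.ComponentCompl (K : Set V)}
    {v x y : V} (hK : ∀ k ∈ K, T.Under infty v k) (hx : ¬ T.Under infty v x)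
    (hy : ¬ T.Under infty v y) (hxC : x ∈ C) : y ∈ C := by
  obtain ⟨m, n, h⟩ := T.exists_iterate_up_eq infty x y
  rw [← mem_of_not_under n hK hy, ← h, mem_of_not_under m hK hx]
  exact hxC

theorem mem_endComp_infty_iff {v x : V} :
    x ∈ endComp infty {v} ↔ ¬ T.Under infty v x := by
  constructor
  · intro h hx
    exact not_under_up v (hx.of_mem h (T.up_mem_endComp infty v))
  · intro hx
    exact mem_of_not_under_of_not_under (by simpa using Under.refl v) (not_under_up v) hx
      (T.up_mem_endComp infty v)

theorem below_iff_under {v x : V} : T.Below infty v x ↔ T.Under infty v x := by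
  by_cases hx : x = v
  · subst hx
    exact ⟨fun _ => Under.refl x, fun _ => Or.inl rfl⟩
  · have h := mem_endComp_infty_iff (T := T) (infty := infty) (v := v) (x := x)
    rw [← not_iff_not, ← h]
    have hx' : x ∉ (({v} : Finset V) : Set V) := by simpa using hx
    simp only [Below, hx, false_or, not_exists, not_not]
    exact ⟨fun h => ⟨hx', h hx'⟩, fun h _ => h.choose_spec⟩

theorem EndBelow.under_of_mem {v y : V} {p : T.G.end} (h : T.EndBelow infty v p) {K : Finset V}
    (hv : v ∈ K) (hy : y ∈ endComp p K) : T.Under infty v y := by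
  by_contra hu
  have h1 : y ∈ endComp p {v} := mem_endComp_of_subset (by simpa using hv) hy
  exact h (ComponentCompl.eq_of_mem h1 (mem_endComp_infty_iff.2 hu))

theorem endBelow_of_mem {v y : V} {p : T.G.end} {K : Finset V}
    (hv : v ∈ K) (hy : y ∈ endComp p K) (hu : T.Under infty v y) : T.EndBelow infty v p := by
  intro h
  have h1 : y ∈ endComp p {v} := mem_endComp_of_subset (by simpa using hv) hy
  have h2 : y ∈ endComp infty {v} := by
    unfold endComp at h1 ⊢
    rwa [← h]
  exact mem_endComp_infty_iff.1 h2 hu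

theorem EndBelow.ne_infty {v : V} {p : T.G.end} (h : T.EndBelow infty v p) : p ≠ infty := by
  rintro rfl
  exact h rfl

theorem EndBelow.of_under {v w : V} {p : T.G.end} (h : T.EndBelow infty v p)
    (hw : T.Under infty w v) : T.EndBelow infty w p := by
  classical
  obtain ⟨y, hy⟩ := exists_mem_endComp p {v, w}
  exact endBelow_of_mem (by simp) hy (hw.trans (h.under_of_mem (by simp) hy))

theorem EndBelow.total {v w : V} {p : T.G.end} (h : T.EndBelow infty v p)
    (hw : T.EndBelow infty w p) : T.Under infty v w ∨ T.Under infty w v := by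
  classical
  obtain ⟨y, hy⟩ := exists_mem_endComp p {v, w}
  exact (h.under_of_mem (by simp) hy).total (hw.under_of_mem (by simp) hy)

theorem finite_kids (v : V) : {c | T.up infty c = v}.Finite := by
  refine (T.locFin v).subset ?_
  rintro c rfl
  exact (T.adj_up infty c).symm

variable (T infty) in
/-- The vertices whose `up` neighbour is `v`. -/
noncomputable def kids (v : V) : Finset V := (finite_kids (T := T) (infty := infty) v).toFinset

@[simp]
theorem mem_kids {v c : V} : c ∈ T.kids infty v ↔ T.up infty c = v := by simp [kids]

theorem EndBelow.exists_kid {v : V} {p : T.G.end} (h : T.EndBelow infty v p) :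
    ∃ c, T.up infty c = v ∧ T.EndBelow infty c p := by
  classical
  obtain ⟨y, hy⟩ := exists_mem_endComp p (insert v (T.kids infty v))
  have hyv := h.under_of_mem (by simp) hy
  have hne : y ≠ v := by
    rintro rfl
    exact ComponentCompl.notMem_of_mem hy (by simp)
  obtain ⟨c, hc, hcy⟩ := hyv.exists_of_ne hne
  exact ⟨c, hc, endBelow_of_mem (by simp [hc]) hy hcy⟩

theorem EndBelow.exists_iterate {v : V} {p : T.G.end} (h : T.EndBelow infty v p) (n : ℕ) :
    ∃ c, (T.up infty)^[n] c = v ∧ T.EndBelow infty c p := by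
  induction n with
  | zero => exact ⟨v, rfl, h⟩
  | succ n ih =>
    obtain ⟨c, hc, hcp⟩ := ih
    obtain ⟨d, hd, hdp⟩ := hcp.exists_kid
    exact ⟨d, by rw [iterate_succ_apply, hd, hc], hdp⟩

theorem EndBelow.eq_of_iterate {v w : V} {p : T.G.end} (hv : T.EndBelow infty v p)
    (hw : T.EndBelow infty w p) {n : ℕ} (h : (T.up infty)^[n] v = (T.up infty)^[n] w) :
    v = w := by
  rcases hv.total hw with ⟨k, hk⟩ | ⟨k, hk⟩
  · rw [← hk, ← iterate_add_apply] at h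
    have := T.iterate_up_inj infty h
    obtain rfl : k = 0 := by omega
    exact hk.symm
  · rw [← hk, ← iterate_add_apply] at h
    have := T.iterate_up_inj infty h
    obtain rfl : k = 0 := by omega
    exact hk

theorem exists_under_of_finset (K : Finset V) (v : V) :
    ∃ n, ∀ k ∈ K, T.Under infty ((T.up infty)^[n] v) k := by
  classical
  induction K using Finset.induction_on with
  | empty => exact ⟨0, by simp⟩
  | insert k K _ ih =>
    obtain ⟨n, hn⟩ := ih
    obtain ⟨a, b, hab⟩ := T.exists_iterate_up_eq infty k v
    refine ⟨b + n, fun x hx => ?_⟩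
    rcases Finset.mem_insert.1 hx with rfl | hx
    · refine ⟨n + a, ?_⟩
      rw [iterate_add_apply, hab, ← iterate_add_apply, Nat.add_comm]
    · exact Under.trans ⟨b, (iterate_add_apply ..).symm⟩ (hn x hx)

theorem exists_endBelow_of_ne {p : T.G.end} (hp : p ≠ infty) (v : V) :
    ∃ n, T.EndBelow infty ((T.up infty)^[n] v) p := by
  classical
  by_contra! hcon
  apply hp
  apply Subtype.ext
  funext K
  obtain ⟨n, hn⟩ := exists_under_of_finset (T := T) (infty := infty) K.unop v
  set u := (T.up infty)^[n] v with hu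
  obtain ⟨y, hy⟩ := exists_mem_endComp p (insert u K.unop)
  obtain ⟨z, hz⟩ := exists_mem_endComp infty (insert u K.unop)
  have hyu : ¬ T.Under infty u y := fun h => hcon n (endBelow_of_mem (by simp [hu]) hy h)
  have hzu : ¬ T.Under infty u z := fun h => (endBelow_of_mem (by simp) hz h) rfl
  have hy' := mem_endComp_of_subset (Finset.subset_insert u K.unop) hy
  have hz' := mem_endComp_of_subset (Finset.subset_insert u K.unop) hz
  exact ComponentCompl.eq_of_mem (mem_of_not_under_of_not_under hn hyu hzu hy') hz'

/-- Below `v` the component of the complement of `K` is constant, if no vertex of `K` is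
under `v`. -/
theorem EndBelow.mem_endComp {v : V} {p : T.G.end} (h : T.EndBelow infty v p) {K : Finset V}
    (hK : ∀ k ∈ K, ¬ T.Under infty v k) : v ∈ endComp p K := by
  classical
  obtain ⟨y, hy⟩ := exists_mem_endComp p (insert v K)
  have hyv := h.under_of_mem (by simp) hy
  replace hy := mem_endComp_of_subset (Finset.subset_insert v K) hy
  obtain ⟨n, rfl⟩ := hyv
  clear h
  induction n generalizing y with
  | zero => exact hy
  | succ n ih =>
    refine ih (T.up infty y) (ComponentCompl.mem_of_adj _ _ hy ?_ (T.adj_up infty y)) hK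
    exact fun hk => hK _ hk ⟨n, rfl⟩

theorem EndBelow.exists_forall_not_under {v : V} {p : T.G.end} (h : T.EndBelow infty v p)
    (K : Finset V) :
    ∃ w, T.Under infty v w ∧ T.EndBelow infty w p ∧ ∀ k ∈ K, ¬ T.Under infty w k := by
  classical
  obtain ⟨y, hy⟩ := exists_mem_endComp p (insert v K)
  induction K using Finset.induction_on with
  | empty => exact ⟨v, Under.refl v, h, by simp⟩
  | insert k K _ ih =>
    obtain ⟨w, hvw, hw, hwK⟩ := ih (mem_endComp_of_subset (by grind) hy)
    by_cases hk : T.Under infty w k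
    · obtain ⟨n, hn⟩ := hk
      obtain ⟨c, hc, hcp⟩ := hw.exists_iterate (n + 1)
      have hwc : T.Under infty w c := ⟨_, hc⟩
      refine ⟨c, hvw.trans hwc, hcp, fun x hx => ?_⟩
      rcases Finset.mem_insert.1 hx with rfl | hx
      · rintro ⟨j, rfl⟩
        rw [← iterate_add_apply, ← hn] at hc
        have := T.iterate_up_inj infty hc
        omega
      · exact fun hcx => hwK x hx (hwc.trans hcx)
    · exact ⟨w, hvw, hw, by simpa [hk] using hwK⟩

/-- The sets of ends below vertices form a basis of neighbourhoods of each end. -/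
theorem EndBelow.exists_forall_eq {v : V} {p : T.G.end} (h : T.EndBelow infty v p)
    (K : Finset V) : ∃ w, T.Under infty v w ∧ T.EndBelow infty w p ∧
      ∀ q : T.G.end, T.EndBelow infty w q → q.val (op K) = p.val (op K) := by
  obtain ⟨w, hvw, hw, hK⟩ := h.exists_forall_not_under K
  exact ⟨w, hvw, hw, fun q hq => ComponentCompl.eq_of_mem (hq.mem_endComp hK) (hw.mem_endComp hK)⟩

/-- A descending ray converges to an end. -/
theorem exists_end_of_ray (r : ℕ → V) (hr : ∀ n, T.up infty (r (n + 1)) = r n) :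
    ∃ p : T.G.end, ∀ n, T.EndBelow infty (r n) p := by
  classical
  have hit : ∀ m n, (T.up infty)^[m] (r (n + m)) = r n := by
    intro m
    induction m with
    | zero => intro n; rfl
    | succ m ih => intro n; rw [iterate_succ_apply, ← Nat.add_assoc, hr, ih]
  have hfin : ∀ K : Finset V, ∃ N, ∀ n ≥ N, r n ∉ K := by
    intro K
    have hinj : Function.Injective r := by
      intro a b hab
      wlog hle : a ≤ b generalizing a b
      · exact (this hab.symm (by omega)).symm
      obtain ⟨k, rfl⟩ := Nat.exists_eq_add_of_le hle
      have := hit k a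
      rw [← hab] at this
      rcases k with _ | k
      · rfl
      · exact absurd this (T.iterate_up_ne infty _ k)
    obtain ⟨N, hN⟩ := (K.finite_toSet.preimage hinj.injOn).bddAbove
    exact ⟨N + 1, fun n hn hK => by have := hN (show n ∈ r ⁻¹' K from hK); omega⟩
  choose N hN using hfin
  have hsame : ∀ (K : Finset V) (C : T.G.ComponentCompl (K : Set V)) (n : ℕ), N K ≤ n →
      (r n ∈ C ↔ r (N K) ∈ C) := by
    intro K C n hn
    induction n, hn using Nat.le_induction with
    | base => rfl
    | succ n hn ih =>
      have hadj : T.G.Adj (r n) (r (n + 1)) := by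
        rw [← hr n]; exact (T.adj_up infty _).symm
      rw [← ih]
      exact ⟨fun h => ComponentCompl.mem_of_adj _ _ h (hN K n hn) hadj.symm,
        fun h => ComponentCompl.mem_of_adj _ _ h (hN K (n + 1) (by omega)) hadj⟩
  let s : ∀ K : (Finset V)ᵒᵖ, T.G.componentComplFunctor.obj K :=
    fun K => T.G.componentComplMk (K := (K.unop : Set V)) (hN K.unop _ le_rfl)
  have hmem : ∀ (K : Finset V) (n : ℕ), N K ≤ n →
      r n ∈ T.G.componentComplMk (K := (K : Set V)) (hN K _ le_rfl) := fun K n hn =>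
    (hsame K _ n hn).2 (componentComplMk_mem _ _)
  have hs : s ∈ T.G.end := by
    intro L K f
    have hKL : K.unop ⊆ L.unop := CategoryTheory.le_of_op_hom f
    refine ComponentCompl.eq_of_mem (y := r (max (N K.unop) (N L.unop))) ?_
      (hmem K.unop _ (le_max_left _ _))
    exact ComponentCompl.subset_hom _ hKL (hmem L.unop _ (le_max_right _ _))
  refine ⟨⟨s, hs⟩, fun n => endBelow_of_mem (K := {r n}) (y := r (n + N {r n}))
    (by simp) (hmem {r n} _ (Nat.le_add_left ..)) ⟨_, hit _ n⟩⟩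

end TreeDyn
namespace TreeDyn

variable {V : Type} {T : TreeDyn V} {infty : T.G.end}

theorem exists_kid (h : ∀ v : V, (T.G.neighborSet v).ncard ≠ 1) (v : V) :
    ∃ c, T.up infty c = v := by
  by_contra! hcon
  refine h v (Set.ncard_eq_one.2 ⟨T.up infty v, ?_⟩)
  ext w
  simp only [mem_neighborSet, Set.mem_singleton_iff]
  refine ⟨fun hw => ?_, fun hw => hw ▸ T.adj_up infty v⟩
  exact (T.eq_up_or_eq_up infty hw).resolve_right fun h => hcon w h.symm

theorem exists_endBelow (h : ∀ v : V, (T.G.neighborSet v).ncard ≠ 1) (v : V) :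
    ∃ p : T.G.end, T.EndBelow infty v p := by
  choose k hk using exists_kid (T := T) (infty := infty) h
  obtain ⟨p, hp⟩ := exists_end_of_ray (T := T) (infty := infty) (fun n => k^[n] v)
    (fun n => by rw [iterate_succ_apply', hk])
  exact ⟨p, hp 0⟩

theorem IsBase.eq_of_up_eq {v₀ : V} (h : T.IsBase infty v₀) {a : V} {m : ℕ}
    (ha : T.up infty a = (T.up infty)^[m + 1] v₀) : a = (T.up infty)^[m] v₀ := by
  by_contra hne
  set x := (T.up infty)^[m + 1] v₀ with hx
  have hxm : T.up infty ((T.up infty)^[m] v₀) = x := (iterate_succ_apply' ..).symm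
  have hsub : ({a, (T.up infty)^[m] v₀, T.up infty x} : Set V) ⊆ T.G.neighborSet x := by
    rintro w (rfl | rfl | rfl)
    · exact (T.adj_iff infty).2 (Or.inr ha.symm)
    · exact (T.adj_iff infty).2 (Or.inr hxm.symm)
    · exact T.adj_up infty x
  have h3 : 3 ≤ (T.G.neighborSet x).ncard := by
    refine le_trans ?_ (Set.ncard_le_ncard hsub (T.locFin x))
    rw [Set.ncard_eq_three.2 ⟨_, _, _, hne, ?_, ?_, rfl⟩]
    · rw [← ha]; exact (T.up_up_ne infty a).symm
    · rw [← hxm]; exact (T.up_up_ne infty _).symm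
  obtain ⟨j, hj⟩ := below_iff_under.1 (h.2 x h3)
  rw [hx, ← iterate_add_apply] at hj
  exact T.iterate_up_ne infty v₀ (j + m) hj

theorem IsBase.eq_of_iterate_up_eq {v₀ : V} (h : T.IsBase infty v₀) {a : V} {m j : ℕ}
    (ha : (T.up infty)^[j] a = (T.up infty)^[m + j] v₀) : a = (T.up infty)^[m] v₀ := by
  induction j generalizing a m with
  | zero => exact ha
  | succ j ih =>
    rw [iterate_succ_apply, show m + (j + 1) = (m + 1) + j by omega] at ha
    exact h.eq_of_up_eq (ih ha)

/-- Every vertex lies on the ray from the base to `infty` or under the base. -/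
theorem IsBase.exists_iterate {v₀ : V} (h : T.IsBase infty v₀) (v : V) :
    (∃ n, v = (T.up infty)^[n] v₀) ∨ ∃ n, (T.up infty)^[n] v = v₀ := by
  obtain ⟨m, n, e⟩ := T.exists_iterate_up_eq infty v v₀
  rcases le_total m n with hmn | hmn
  · obtain ⟨k, rfl⟩ := Nat.exists_eq_add_of_le hmn
    exact Or.inl ⟨k, h.eq_of_iterate_up_eq (by rw [e, Nat.add_comm])⟩
  · obtain ⟨k, rfl⟩ := Nat.exists_eq_add_of_le hmn
    rw [iterate_add_apply] at e
    exact Or.inr ⟨k, h.eq_of_iterate_up_eq (m := 0) (j := n) (by rw [e, Nat.zero_add])⟩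

variable (T) in
/-- The fibre of the branched covering over a vertex. -/
noncomputable def fib (w : V) : Finset V := (T.finFibers w).toFinset

@[simp]
theorem mem_fib {w a : V} : a ∈ T.fib w ↔ T.F a = w := by simp [fib]

theorem sum_fib (infty : T.G.end) {dV : V → ℕ} {dE : V → V → ℕ} (hdeg : T.IsLocalDeg dV dE) {Dg : ℕ}
    (hDg : T.IsGlobalDeg dE Dg) (w : V) : ∑ a ∈ T.fib w, dV a = Dg := by
  rw [hDg (T.adj_up infty w), ← finsum_mem_coe_finset]
  have : ((T.fib w : Finset V) : Set V) = {a | T.F a = w} := by ext; simp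
  rw [this]
  refine finsum_mem_congr rfl fun a ha => ?_
  obtain rfl : T.F a = w := ha
  obtain ⟨b, hb, hFb⟩ := T.edgeSurj (T.adj_up infty (T.F a))
  rw [hdeg.2.2.2.2 hb, hFb]

theorem card_fib_le (infty : T.G.end) {dV : V → ℕ} {dE : V → V → ℕ} (hdeg : T.IsLocalDeg dV dE)
    {Dg : ℕ} (hDg : T.IsGlobalDeg dE Dg) (w : V) : (T.fib w).card ≤ Dg := by
  rw [← sum_fib infty hdeg hDg w, Finset.card_eq_sum_ones]
  exact Finset.sum_le_sum fun a _ => hdeg.2.1 a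

variable (T infty) in
/-- The branched covering preserves the direction of `infty` at `a`. -/
def Upright (a : V) : Prop := T.F (T.up infty a) = T.up infty (T.F a)

theorem exists_kid_of_not_upright {a : V} (h : ¬ T.Upright infty a) :
    ∃ c, T.up infty c = a ∧ T.F c = T.up infty (T.F a) ∧ ¬ T.Upright infty c := by
  obtain ⟨c, hac, hc⟩ := T.edgeSurj (T.adj_up infty (T.F a))
  have hca : T.up infty c = a := by
    rcases T.eq_up_or_eq_up infty hac with rfl | h'
    · exact absurd hc h
    · exact h'.symm
  refine ⟨c, hca, hc, fun hgood => ?_⟩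
  rw [Upright, hca, hc] at hgood
  exact T.up_up_ne infty _ hgood.symm

theorem exists_kid_of_upright {a u : V} (h : T.Upright infty a) (hu : T.up infty u = T.F a) :
    ∃ c, T.up infty c = a ∧ T.F c = u := by
  obtain ⟨c, hac, hc⟩ := T.edgeSurj (v := a) (w' := u) ((T.adj_iff infty).2 (Or.inr hu.symm))
  refine ⟨c, ?_, hc⟩
  rcases T.eq_up_or_eq_up infty hac with rfl | h'
  · rw [Upright, ← hu, hc] at h
    exact absurd h.symm (T.up_up_ne infty u)
  · exact h'.symm

/-- If all vertices below `c` have a single kid, then there is an isolated end below `c`. -/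
theorem exists_isolated_endBelow (h : ∀ v : V, (T.G.neighborSet v).ncard ≠ 1) {c : V}
    (hc : ∀ n a b, (T.up infty)^[n] a = c → (T.up infty)^[n] b = c → a = b) :
    ∃ p : T.G.end, T.EndBelow infty c p ∧ IsIsolatedEnd T.G p := by
  obtain ⟨p, hp⟩ := exists_endBelow (infty := infty) h c
  refine ⟨p, hp, ?_⟩
  have hsing : ({p} : Set T.G.end) = {q | T.EndBelow infty c q} := by
    ext q
    refine ⟨fun hq => hq ▸ hp, fun hq => Subtype.ext (funext fun K => ?_)⟩
    obtain ⟨w, ⟨n, hn⟩, -, hw⟩ := hp.exists_forall_eq K.unop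
    obtain ⟨b, hb, hbq⟩ := EndBelow.exists_iterate hq n
    exact hw q (hc n b w hb hn ▸ hbq)
  unfold IsIsolatedEnd
  rw [hsing]
  refine ⟨_, @IsOpen.preimage _ _ (⨅ K : (Finset V)ᵒᵖ, TopologicalSpace.induced (fun f => f K) ⊥)
    ⊥ (fun f : ∀ K, T.G.componentComplFunctor.obj K => f (op {c})) ?_
    {infty.val (op {c})}ᶜ trivial, rfl⟩
  exact continuous_iff_le_induced.2 (iInf_le _ (op ({c} : Finset V)))

open Classical in
/-- The branched covering preserves the direction of `infty`: otherwise, all vertices below some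
vertex would have a single kid, producing an isolated end different from `infty`. -/
theorem IsPolyLike.upright (hpl : T.IsPolyLike infty) {dV : V → ℕ} {dE : V → V → ℕ}
    (hdeg : T.IsLocalDeg dV dE) {v₀ : V} (hbase : T.IsBase infty v₀) {Dg : ℕ}
    (hDg : T.IsGlobalDeg dE Dg) (w : V) : T.Upright infty w := by
  by_contra hw
  set x : ℕ → V := fun m => (T.up infty)^[m] v₀ with hx
  have hxs : ∀ m, x (m + 1) = T.up infty (x m) := fun m => iterate_succ_apply' ..
  let S : ℕ → Finset V := fun m => (T.fib (x m)).filter fun a => ¬ T.Upright infty a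
  let R : ℕ → Finset V := fun m => (T.fib (x m)).filter fun a => T.Upright infty a
  have memS : ∀ m a, a ∈ S m ↔ T.F a = x m ∧ ¬ T.Upright infty a := by simp [S]
  have memR : ∀ m a, a ∈ R m ↔ T.F a = x m ∧ T.Upright infty a := by simp [R]
  have hS : ∀ m, S m ⊆ (S (m + 1)).image (T.up infty) := by
    intro m a ha
    obtain ⟨ha1, ha2⟩ := (memS m a).1 ha
    obtain ⟨c, hca, hFc, hc⟩ := exists_kid_of_not_upright ha2
    exact Finset.mem_image.2 ⟨c, (memS _ _).2 ⟨by rw [hFc, ha1, hxs], hc⟩, hca⟩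
  have hR : ∀ m, R (m + 1) ⊆ (R m).image (T.up infty) := by
    intro m a ha
    obtain ⟨ha1, ha2⟩ := (memR _ a).1 ha
    obtain ⟨c, hca, hFc⟩ := exists_kid_of_upright ha2 (u := x m) (by rw [ha1, hxs])
    exact Finset.mem_image.2 ⟨c, (memR _ _).2 ⟨hFc, by rw [Upright, hca, ha1, hFc, hxs]⟩, hca⟩
  have hSle : ∀ m, (S m).card ≤ (S (m + 1)).card := fun m =>
    (Finset.card_le_card (hS m)).trans Finset.card_image_le
  have hRle : ∀ m, (R (m + 1)).card ≤ (R m).card := fun m =>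
    (Finset.card_le_card (hR m)).trans Finset.card_image_le
  have hSD : ∀ m, (S m).card ≤ Dg := fun m =>
    (Finset.card_filter_le _ _).trans (card_fib_le infty hdeg hDg _)
  obtain ⟨M, hM⟩ : ∃ M, ∀ m, (Dg - (S M).card) + (R M).card ≤ (Dg - (S m).card) + (R m).card := by
    let f : ℕ → ℕ := fun m => (Dg - (S m).card) + (R m).card
    exact ⟨Function.argmin f, fun m => Function.argmin_le f m⟩
  have hconst : ∀ m ≥ M, (Dg - (S m).card) + (R m).card = (Dg - (S M).card) + (R M).card := by
    intro m hm
    induction m, hm using Nat.le_induction with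
    | base => rfl
    | succ m hm ih =>
      have := hSle m
      have := hRle m
      have := hM (m + 1)
      omega
  have hScard : ∀ m ≥ M, (S m).card = (S (m + 1)).card := by
    intro m hm
    have := hconst m hm
    have := hconst (m + 1) (by omega)
    have := hSle m
    have := hRle m
    have := hSD m
    have := hSD (m + 1)
    omega
  have hRcard : ∀ m ≥ M, (R m).card = (R (m + 1)).card := by
    intro m hm
    have := hconst m hm
    have := hconst (m + 1) (by omega)
    have := hScard m hm
    omega
  -- far up the ray, kids of a vertex that is not upright are not upright
  have hkidS : ∀ m ≥ M, ∀ c ∈ S (m + 1), ∀ d, T.up infty d = c → d ∈ S (m + 2) := by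
    intro m hm c hc d hd
    obtain ⟨hc1, hc2⟩ := (memS _ c).1 hc
    have hadj : T.G.Adj (T.F c) (T.F d) := by
      rw [← hd]; exact T.adjMap (T.adj_up infty d).symm
    rcases T.eq_up_or_eq_up infty hadj with h1 | h1
    · refine (memS _ d).2 ⟨by rw [h1, hc1, hxs (m + 1)], fun hgood => ?_⟩
      rw [Upright, hd, h1] at hgood
      exact T.up_up_ne infty _ hgood.symm
    · exfalso
      have hFd : T.F d = x m := hbase.eq_of_up_eq (by rw [← h1, hc1])
      have hdR : d ∈ R m := (memR _ d).2 ⟨hFd, by rw [Upright, hd, h1]⟩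
      have hsub : insert c (R (m + 1)) ⊆ (R m).image (T.up infty) :=
        Finset.insert_subset (Finset.mem_image.2 ⟨d, hdR, hd⟩) (hR m)
      have hcR : c ∉ R (m + 1) := fun h => hc2 ((memR _ c).1 h).2
      have := (Finset.card_le_card hsub).trans Finset.card_image_le
      rw [Finset.card_insert_of_notMem hcR, hRcard m hm] at this
      omega
  have hinj : ∀ m ≥ M, Set.InjOn (T.up infty) (S (m + 1)) := by
    intro m hm
    refine Finset.card_image_iff.1 (le_antisymm Finset.card_image_le ?_)
    rw [← hScard m hm]
    exact Finset.card_le_card (hS m)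
  have hkids : ∀ n, ∀ m ≥ M, ∀ c ∈ S (m + 1), ∀ a b, (T.up infty)^[n] a = c →
      (T.up infty)^[n] b = c → a = b ∧ a ∈ S (m + n + 1) := by
    intro n
    induction n with
    | zero =>
      rintro m hm c hc a b rfl hb
      exact ⟨hb.symm, hc⟩
    | succ n ih =>
      intro m hm c hc a b ha hb
      obtain ⟨hab, haS⟩ := ih m hm c hc _ _ ha hb
      have h1 := hkidS (m + n) (by omega) _ haS a rfl
      have h2 := hkidS (m + n) (by omega) _ haS b hab.symm
      exact ⟨hinj (m + n + 1) (by omega) h1 h2 hab, h1⟩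
  -- some vertex far up the ray has a preimage that is not upright
  have hdesc : ∀ n, ∃ a, T.F a = (T.up infty)^[n] (T.F w) ∧ ¬ T.Upright infty a := by
    intro n
    induction n with
    | zero => exact ⟨w, rfl, hw⟩
    | succ n ih =>
      obtain ⟨a, ha1, ha2⟩ := ih
      obtain ⟨c, -, hFc, hc⟩ := exists_kid_of_not_upright ha2
      exact ⟨c, by rw [hFc, ha1, iterate_succ_apply'], hc⟩
  obtain ⟨m, n, e⟩ := T.exists_iterate_up_eq infty (T.F w) v₀
  obtain ⟨c, hc1, hc2⟩ := hdesc (M + 1 + m)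
  have hcS : c ∈ S (M + n + 1) := by
    refine (memS _ c).2 ⟨?_, hc2⟩
    rw [hc1, iterate_add_apply, e, ← iterate_add_apply]
    show _ = (T.up infty)^[M + n + 1] v₀
    congr 1
    omega
  obtain ⟨p, hp, hiso⟩ := exists_isolated_endBelow (infty := infty) hpl.2.2.2.1 (c := c)
    fun k a b ha hb => (hkids k (M + n) (by omega) c hcS a b ha hb).1
  exact hp.ne_infty (hpl.2.2.1 p hiso)

end TreeDyn
namespace TreeDyn

variable {V : Type} {T : TreeDyn V} {infty : T.G.end}

theorem F_iterate_up (hup : ∀ w, T.Upright infty w) (n : ℕ) (v : V) :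
    T.F ((T.up infty)^[n] v) = (T.up infty)^[n] (T.F v) :=
  (Function.Semiconj.iterate_right (f := T.F) (ga := T.up infty) (gb := T.up infty) hup n) v

theorem iterate_F_iterate_up (hup : ∀ w, T.Upright infty w) (m n : ℕ) (v : V) :
    T.F^[m] ((T.up infty)^[n] v) = (T.up infty)^[n] (T.F^[m] v) :=
  (Function.Commute.iterate_iterate (f := T.F) (g := T.up infty) hup m n) v

/-- The branched covering moves the base strictly upwards. -/
theorem IsPolyLike.exists_shift (hpl : T.IsPolyLike infty) {v₀ : V} (hbase : T.IsBase infty v₀)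
    (hup : ∀ w, T.Upright infty w) : ∃ k, 0 < k ∧ T.F v₀ = (T.up infty)^[k] v₀ := by
  classical
  obtain ⟨m, n, e⟩ := T.exists_iterate_up_eq infty (T.F v₀) v₀
  rcases lt_or_ge m n with hmn | hmn
  · obtain ⟨k, rfl⟩ := Nat.exists_eq_add_of_le hmn.le
    exact ⟨k, by omega, hbase.eq_of_iterate_up_eq (by rw [e, Nat.add_comm])⟩
  exfalso
  obtain ⟨j, rfl⟩ := Nat.exists_eq_add_of_le hmn
  rw [iterate_add_apply, ← F_iterate_up hup] at e
  have hj : T.F ((T.up infty)^[j] v₀) = v₀ :=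
    hbase.eq_of_iterate_up_eq (m := 0) (j := n) (by rw [e, Nat.zero_add])
  rcases j with _ | j
  · have hfix : ∀ a, T.F^[a] v₀ = v₀ := fun a => Function.iterate_fixed hj a
    obtain ⟨w, ⟨a, b, -, -, hab⟩, hw⟩ := hpl.2.2.2.2 (T.up infty v₀)
    obtain ⟨i, hi⟩ := below_iff_under.1 (hbase.2 w hw)
    have h1 := iterate_F_iterate_up hup a 1 v₀
    rw [iterate_one, hab, hfix] at h1
    have h2 := iterate_F_iterate_up hup b i w
    rw [hi, hfix, h1, ← iterate_succ_apply] at h2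
    exact T.iterate_up_ne infty v₀ i h2.symm
  · have hsub : T.G.neighborSet v₀ ⊆
        T.F '' {(T.up infty)^[j] v₀, (T.up infty)^[j + 2] v₀} := by
      intro w hw
      obtain ⟨c, hc, rfl⟩ := T.edgeSurj (v := (T.up infty)^[j + 1] v₀) (w' := w) (by rwa [hj])
      refine ⟨c, ?_, rfl⟩
      rcases T.eq_up_or_eq_up infty hc with h | h
      · exact Or.inr (by rw [Set.mem_singleton_iff, h, ← iterate_succ_apply' (T.up infty)])
      · exact Or.inl (hbase.eq_of_up_eq h.symm)
    have h1 := Set.ncard_le_ncard hsub ((Set.toFinite _).image _)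
    have h2 := Set.ncard_image_le (f := T.F)
      (Set.toFinite {(T.up infty)^[j] v₀, (T.up infty)^[j + 2] v₀})
    have h3 := Set.ncard_insert_le ((T.up infty)^[j] v₀) {(T.up infty)^[j + 2] v₀}
    rw [Set.ncard_singleton] at h3
    have := hbase.1
    omega

theorem IsLocalDeg.eq_up {dV : V → ℕ} {dE : V → V → ℕ} (hdeg : T.IsLocalDeg dV dE)
    (hup : ∀ w, T.Upright infty w) (c : V) : dV c = dE (T.up infty c) c := by
  rw [hdeg.2.2.2.2 (T.adj_up infty c), hdeg.1 (T.up infty c) c]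
  have : {w' | T.G.Adj c w' ∧ T.F w' = T.F (T.up infty c)} = {T.up infty c} := by
    ext w
    simp only [Set.mem_ofPred_eq, Set.mem_singleton_iff]
    constructor
    · rintro ⟨hadj, hF⟩
      refine (T.eq_up_or_eq_up infty hadj).resolve_right fun h => ?_
      have h1 : T.up infty (T.up infty (T.F w)) = T.F w := by
        rw [← hup w, ← h, ← hup c, hF]
      exact T.up_up_ne infty _ h1
    · rintro rfl
      exact ⟨T.adj_up infty c, rfl⟩
  rw [this, finsum_mem_singleton]

open Classical in
theorem IsLocalDeg.sum_kids {dV : V → ℕ} {dE : V → V → ℕ} (hdeg : T.IsLocalDeg dV dE)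
    (hup : ∀ w, T.Upright infty w) {v u : V} (hu : T.up infty u = T.F v) :
    ∑ c ∈ T.kids infty v with T.F c = u, dV c = dV v := by
  obtain ⟨b, hb, rfl⟩ := exists_kid_of_upright (hup v) hu
  have hadj : T.G.Adj v b := (T.adj_iff infty).2 (Or.inr hb.symm)
  rw [hdeg.2.2.2.2 hadj]
  have : {w' | T.G.Adj v w' ∧ T.F w' = T.F b} =
      (((T.kids infty v).filter fun c => T.F c = T.F b : Finset V) : Set V) := by
    ext w
    simp only [Set.mem_ofPred_eq, Finset.coe_filter, mem_kids, and_congr_left_iff]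
    intro hF
    constructor
    · intro hw
      rcases T.eq_up_or_eq_up infty hw with rfl | h
      · rw [hup v, ← hu] at hF
        exact absurd hF (T.up_up_ne infty _)
      · exact h.symm
    · exact fun h => (T.adj_iff infty).2 (Or.inr h.symm)
  rw [this, finsum_mem_coe_finset]
  refine Finset.sum_congr rfl fun c hc => ?_
  rw [hdeg.eq_up hup c, mem_kids.1 (Finset.mem_filter.1 hc).1]

section Mass

variable {dV : V → ℕ} {dE : V → V → ℕ} {v₀ : V} {Dg : ℕ} {μ : V → ℚ}

theorem IsMass.iterate_up (hμ : T.IsMass infty v₀ dV Dg μ) (n : ℕ) :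
    μ ((T.up infty)^[n] v₀) = 1 := by
  apply hμ.1
  rw [height, if_pos (below_iff_under.2 ⟨n, rfl⟩)]
  positivity

theorem globalDeg_pos (infty : T.G.end) (hdeg : T.IsLocalDeg dV dE) (hDg : T.IsGlobalDeg dE Dg)
    (v : V) : 0 < Dg := by
  rw [← sum_fib infty hdeg hDg (T.F v)]
  exact Finset.sum_pos (fun a _ => hdeg.2.1 a) ⟨v, mem_fib.2 rfl⟩

theorem IsMass.eq_mul (hμ : T.IsMass infty v₀ dV Dg μ) (hdeg : T.IsLocalDeg dV dE)
    (hDg : T.IsGlobalDeg dE Dg) (v : V) : μ v = (dV v : ℚ) / Dg * μ (T.F v) := by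
  have h1 : (0 : ℚ) < Dg := by exact_mod_cast globalDeg_pos infty hdeg hDg v
  have h2 : (0 : ℚ) < dV v := by exact_mod_cast hdeg.2.1 v
  rw [hμ.2 v]
  field_simp

/-- Induction along the dynamics: a property that holds on the ray from the base to `infty`
and that can be pulled back holds everywhere. -/
theorem IsBase.induction (hbase : T.IsBase infty v₀) (hup : ∀ w, T.Upright infty w) {k : ℕ}
    (hk : 0 < k) (hF : T.F v₀ = (T.up infty)^[k] v₀) {P : V → Prop}
    (ray : ∀ n, P ((T.up infty)^[n + 1] v₀)) (pull : ∀ v, P (T.F v) → P v) (v : V) : P v := by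
  have key : ∀ n v, (T.up infty)^[n] v = v₀ → P v := by
    intro n
    induction n using Nat.strong_induction_on with
    | _ n ih =>
      intro v hv
      apply pull
      have h1 : (T.up infty)^[n] (T.F v) = (T.up infty)^[k] v₀ := by
        rw [← F_iterate_up hup, hv, hF]
      rcases lt_or_ge n k with hnk | hnk
      · obtain ⟨j, rfl⟩ := Nat.exists_eq_add_of_lt hnk
        have h2 : T.F v = (T.up infty)^[j + 1] v₀ :=
          hbase.eq_of_iterate_up_eq (j := n) (by rw [h1]; congr 1; omega)
        exact h2 ▸ ray j
      · obtain ⟨j, rfl⟩ := Nat.exists_eq_add_of_le hnk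
        rw [iterate_add_apply] at h1
        refine ih j (by omega) _ (hbase.eq_of_iterate_up_eq (m := 0) (j := k) ?_)
        rw [h1, Nat.zero_add]
  rcases hbase.exists_iterate v with ⟨n, rfl⟩ | ⟨n, hn⟩
  · rcases n with _ | n
    · exact key 0 _ rfl
    · exact ray n
  · exact key n v hn

theorem IsMass.pos (hμ : T.IsMass infty v₀ dV Dg μ) (hdeg : T.IsLocalDeg dV dE)
    (hDg : T.IsGlobalDeg dE Dg) (hbase : T.IsBase infty v₀) (hup : ∀ w, T.Upright infty w)
    {k : ℕ} (hk : 0 < k) (hF : T.F v₀ = (T.up infty)^[k] v₀) (v : V) : 0 < μ v := by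
  refine hbase.induction hup hk hF (P := fun v => 0 < μ v) (fun n => ?_) (fun v hv => ?_) v
  · rw [hμ.iterate_up]
    exact one_pos
  · have h1 : (0 : ℚ) < Dg := by exact_mod_cast globalDeg_pos infty hdeg hDg v
    have h2 : (0 : ℚ) < dV v := by exact_mod_cast hdeg.2.1 v
    rw [hμ.eq_mul hdeg hDg]
    positivity

theorem IsBase.kids_iterate_up (hbase : T.IsBase infty v₀) (n : ℕ) :
    T.kids infty ((T.up infty)^[n + 1] v₀) = {(T.up infty)^[n] v₀} := by
  ext c
  rw [mem_kids, Finset.mem_singleton]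
  exact ⟨hbase.eq_of_up_eq, fun h => by rw [h, iterate_succ_apply']⟩

theorem IsMass.sum_kids (hμ : T.IsMass infty v₀ dV Dg μ) (hdeg : T.IsLocalDeg dV dE)
    (hDg : T.IsGlobalDeg dE Dg) (hbase : T.IsBase infty v₀) (hup : ∀ w, T.Upright infty w)
    {k : ℕ} (hk : 0 < k) (hF : T.F v₀ = (T.up infty)^[k] v₀) (v : V) :
    ∑ c ∈ T.kids infty v, μ c = μ v := by
  classical
  refine hbase.induction hup hk hF (P := fun v => ∑ c ∈ T.kids infty v, μ c = μ v)
    (fun n => ?_) (fun v hv => ?_) v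
  · rw [hbase.kids_iterate_up, Finset.sum_singleton, hμ.iterate_up, hμ.iterate_up]
  · have hmaps : ∀ c ∈ T.kids infty v, T.F c ∈ T.kids infty (T.F v) := by
      intro c hc
      rw [mem_kids] at hc ⊢
      rw [← hup c, hc]
    rw [← Finset.sum_fiberwise_of_maps_to hmaps, hμ.eq_mul hdeg hDg v, ← hv, Finset.mul_sum]
    refine Finset.sum_congr rfl fun u hu => ?_
    rw [← hdeg.sum_kids hup (mem_kids.1 hu), Nat.cast_sum, Finset.sum_div, Finset.sum_mul]
    refine Finset.sum_congr rfl fun c hc => ?_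
    rw [hμ.eq_mul hdeg hDg c, (Finset.mem_filter.1 hc).2]

theorem IsMass.sum_fib (hμ : T.IsMass infty v₀ dV Dg μ) (hdeg : T.IsLocalDeg dV dE)
    (hDg : T.IsGlobalDeg dE Dg) (w : V) : ∑ v ∈ T.fib w, μ v = μ w := by
  have h1 : (0 : ℚ) < Dg := by exact_mod_cast globalDeg_pos infty hdeg hDg w
  have h2 : ∀ v ∈ T.fib w, μ v = (dV v : ℚ) / Dg * μ w := fun v hv => by
    rw [hμ.eq_mul hdeg hDg, mem_fib.1 hv]
  rw [Finset.sum_congr rfl h2, ← Finset.sum_mul, ← Finset.sum_div, ← Nat.cast_sum,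
    TreeDyn.sum_fib infty hdeg hDg w, div_self h1.ne', one_mul]

theorem IsLocalDeg.le_up (hdeg : T.IsLocalDeg dV dE) (hup : ∀ w, T.Upright infty w) (c : V) :
    dV c ≤ dV (T.up infty c) := by
  classical
  rw [← hdeg.sum_kids hup (v := T.up infty c) (u := T.F c) (hup c).symm]
  exact Finset.single_le_sum (f := dV) (fun _ _ => Nat.zero_le _) (by simp)

theorem IsBase.one_lt_card_kids (hbase : T.IsBase infty v₀) : 1 < (T.kids infty v₀).card := by
  classical
  have hsub : T.G.neighborSet v₀ ⊆
      (insert (T.up infty v₀) (T.kids infty v₀) : Finset V) := by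
    intro w hw
    rcases T.eq_up_or_eq_up infty hw with rfl | h
    · simp
    · simp [← h]
  have h1 := Set.ncard_le_ncard hsub (Finset.finite_toSet _)
  rw [Set.ncard_coe_finset] at h1
  have h2 := Finset.card_insert_le (T.up infty v₀) (T.kids infty v₀)
  have := hbase.1
  omega

/-- Strictly under the base, the local degree is smaller than the global degree. -/
theorem IsBase.deg_lt (hbase : T.IsBase infty v₀) (hdeg : T.IsLocalDeg dV dE)
    (hDg : T.IsGlobalDeg dE Dg) (hup : ∀ w, T.Upright infty w) {k : ℕ} (hk : 0 < k)
    (hF : T.F v₀ = (T.up infty)^[k] v₀) {n : ℕ} {v : V} (hv : (T.up infty)^[n + 1] v = v₀) :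
    dV v < Dg := by
  classical
  induction n generalizing v with
  | zero =>
    have hv : T.up infty v = v₀ := hv
    obtain ⟨c, hc, hcv⟩ := Finset.exists_mem_ne hbase.one_lt_card_kids v
    obtain ⟨j, rfl⟩ := Nat.exists_eq_add_of_lt hk
    have hFkid : ∀ d, T.up infty d = v₀ → T.F d = (T.up infty)^[0 + j] v₀ := by
      intro d hd
      apply hbase.eq_of_up_eq
      rw [← hup d, hd, hF]
    have hle : ∑ d ∈ {v, c}, dV d ≤ ∑ d ∈ T.fib ((T.up infty)^[0 + j] v₀), dV d := by
      refine Finset.sum_le_sum_of_subset ?_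
      intro d hd
      rw [mem_fib]
      apply hFkid
      rcases Finset.mem_insert.1 hd with rfl | hd
      · exact hv
      · rw [Finset.mem_singleton.1 hd]
        exact mem_kids.1 hc
    rw [TreeDyn.sum_fib infty hdeg hDg, Finset.sum_pair hcv.symm] at hle
    have := hdeg.2.1 c
    omega
  | succ n ih => exact (hdeg.le_up hup v).trans_lt (ih hv)

theorem IsMass.le_one (hμ : T.IsMass infty v₀ dV Dg μ) (hdeg : T.IsLocalDeg dV dE)
    (hDg : T.IsGlobalDeg dE Dg) (hbase : T.IsBase infty v₀) (hup : ∀ w, T.Upright infty w)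
    {k : ℕ} (hk : 0 < k) (hF : T.F v₀ = (T.up infty)^[k] v₀) (v : V) : μ v ≤ 1 := by
  refine hbase.induction hup hk hF (P := fun v => μ v ≤ 1) (fun n => ?_) (fun v hv => ?_) v
  · rw [hμ.iterate_up]
  · have h1 : (0 : ℚ) < Dg := by exact_mod_cast globalDeg_pos infty hdeg hDg v
    have h2 : dV v ≤ Dg := by
      rw [← TreeDyn.sum_fib infty hdeg hDg (T.F v)]
      exact Finset.single_le_sum (f := dV) (fun _ _ => Nat.zero_le _) (mem_fib.2 rfl)
    rw [hμ.eq_mul hdeg hDg]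
    refine mul_le_one₀ ?_ (hμ.pos hdeg hDg hbase hup hk hF _).le hv
    rw [div_le_one h1]
    exact_mod_cast h2

/-- The mass decays geometrically with the depth under the base. -/
theorem IsMass.le_pow (hμ : T.IsMass infty v₀ dV Dg μ) (hdeg : T.IsLocalDeg dV dE)
    (hDg : T.IsGlobalDeg dE Dg) (hbase : T.IsBase infty v₀) (hup : ∀ w, T.Upright infty w)
    {k : ℕ} (hk : 0 < k) (hF : T.F v₀ = (T.up infty)^[k] v₀) {n : ℕ} {v : V}
    (hv : (T.up infty)^[n * k] v = v₀) : μ v ≤ (((Dg : ℚ) - 1) / Dg) ^ n := by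
  induction n generalizing v with
  | zero => simpa using hμ.le_one hdeg hDg hbase hup hk hF v
  | succ n ih =>
    obtain ⟨j, hj⟩ : ∃ j, (n + 1) * k = j + 1 := Nat.exists_eq_add_one.2 (by positivity)
    have hlt := hbase.deg_lt hdeg hDg hup hk hF (hj ▸ hv)
    have h1 : (0 : ℚ) < Dg := by exact_mod_cast globalDeg_pos infty hdeg hDg v
    have hFv : (T.up infty)^[n * k] (T.F v) = v₀ := by
      refine hbase.eq_of_iterate_up_eq (m := 0) (j := k) ?_
      rw [← iterate_add_apply, Nat.zero_add, ← hF, ← hv, F_iterate_up hup]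
      congr 1
      ring
    have hcast : (dV v : ℚ) ≤ (Dg : ℚ) - 1 := by
      rw [le_sub_iff_add_le]
      exact_mod_cast hlt
    rw [hμ.eq_mul hdeg hDg, pow_succ']
    exact mul_le_mul (by gcongr) (ih hFv) (hμ.pos hdeg hDg hbase hup hk hF _).le
      (div_nonneg (le_trans (Nat.cast_nonneg _) hcast) h1.le)

end Mass

end TreeDyn

namespace TreeDyn

variable {V : Type} {T : TreeDyn V} {infty : T.G.end}

noncomputable instance : TopologicalSpace (JSet T infty) := JTop T infty

noncomputable instance : MeasurableSpace (JSet T infty) := JBorel T infty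

instance : BorelSpace (JSet T infty) := ⟨rfl⟩

variable (T infty) in
/-- The set of ends of the Julia set that lie below the vertex `v`. -/
def cyl (v : V) : Set (JSet T infty) := {p | T.EndBelow infty v p.val}

theorem JTop_eq : (inferInstance : TopologicalSpace (JSet T infty)) =
    ⨅ K : (Finset V)ᵒᵖ,
      TopologicalSpace.induced (fun p : JSet T infty => p.val.val K) ⊥ := by
  refine induced_compose.trans (induced_iInf.trans ?_)
  exact iInf_congr fun K => induced_compose

theorem isOpen_preimage_val (K : Finset V) (s : Set (T.G.ComponentCompl (K : Set V))) :
    IsOpen {p : JSet T infty | p.val.val (op K) ∈ s} := by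
  have h := (JTop_eq (T := T) (infty := infty)).trans_le (iInf_le _ (op K))
  exact h _ ⟨s, trivial, rfl⟩

theorem isClopen_cyl (v : V) : IsClopen (T.cyl infty v) := by
  refine ⟨⟨?_⟩, isOpen_preimage_val {v} {infty.val (op {v})}ᶜ⟩
  have h := isOpen_preimage_val (T := T) (infty := infty) {v} {infty.val (op {v})}
  convert h using 1
  ext p
  exact not_not

theorem nonempty_vertex (T : TreeDyn V) : Nonempty V := T.isTree.connected.nonempty

theorem exists_mem_cyl (p : JSet T infty) : ∃ v, p ∈ T.cyl infty v := by
  obtain ⟨v⟩ := T.nonempty_vertex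
  obtain ⟨n, hn⟩ := exists_endBelow_of_ne p.2 v
  exact ⟨_, hn⟩

theorem exists_cyl_subset {p : JSet T infty} {U : Set (JSet T infty)} (hU : IsOpen U)
    (hp : p ∈ U) : ∃ v, p ∈ T.cyl infty v ∧ T.cyl infty v ⊆ U := by
  have hle : ⨅ v : {v // p ∈ T.cyl infty v}, Filter.principal (T.cyl infty v.1) ≤ nhds p := by
    have h : nhds p = _ := congrArg (fun t => @nhds _ t p) (JTop_eq (T := T) (infty := infty))
    rw [h, nhds_iInf]
    refine le_iInf fun K => ?_
    let _ : TopologicalSpace (T.G.componentComplFunctor.obj K) := ⊥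
    have : DiscreteTopology (T.G.componentComplFunctor.obj K) := ⟨rfl⟩
    rw [nhds_induced, nhds_discrete, Filter.comap_pure]
    obtain ⟨v, hv⟩ := exists_mem_cyl p
    obtain ⟨w, -, hw, hwq⟩ := EndBelow.exists_forall_eq hv K.unop
    refine iInf_le_of_le ⟨w, hw⟩ (Filter.principal_mono.2 fun q hq => ?_)
    exact hwq q.val hq
  have hmem := hle (hU.mem_nhds hp)
  have : Nonempty {v // p ∈ T.cyl infty v} := (exists_mem_cyl p).elim fun v hv => ⟨⟨v, hv⟩⟩
  rw [Filter.mem_iInf_of_directed] at hmem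
  · obtain ⟨v, hv⟩ := hmem
    exact ⟨v.1, v.2, Filter.mem_principal.1 hv⟩
  · intro v w
    rcases EndBelow.total v.2 w.2 with h | h
    · exact ⟨w, Filter.principal_mono.2 fun q hq => EndBelow.of_under hq h, le_rfl⟩
    · exact ⟨v, le_rfl, Filter.principal_mono.2 fun q hq => EndBelow.of_under hq h⟩

theorem isTopologicalBasis_cyl :
    TopologicalSpace.IsTopologicalBasis (Set.range (T.cyl infty)) := by
  refine TopologicalSpace.isTopologicalBasis_of_isOpen_of_nhds ?_ ?_
  · rintro _ ⟨v, rfl⟩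
    exact (isClopen_cyl v).2
  · intro p U hp hU
    obtain ⟨v, hv, hvU⟩ := exists_cyl_subset hU hp
    exact ⟨_, ⟨v, rfl⟩, hv, hvU⟩

theorem isPiSystem_cyl : IsPiSystem (Set.range (T.cyl infty)) := by
  rintro _ ⟨v, rfl⟩ _ ⟨w, rfl⟩ ⟨p, hv, hw⟩
  rcases EndBelow.total hv hw with h | h
  · exact ⟨w, (Set.inter_eq_right.2 fun q hq => EndBelow.of_under hq h).symm⟩
  · exact ⟨v, (Set.inter_eq_left.2 fun q hq => EndBelow.of_under hq h).symm⟩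

instance : T2Space (JSet T infty) := by
  refine ⟨fun p q hpq => ?_⟩
  have : ∃ K, p.val.val K ≠ q.val.val K := by
    by_contra! h
    exact hpq (Subtype.ext (Subtype.ext (funext h)))
  obtain ⟨K, hK⟩ := this
  refine ⟨_, _, isOpen_preimage_val K.unop {p.val.val K}, isOpen_preimage_val K.unop {q.val.val K},
    rfl, rfl, Set.disjoint_left.2 fun r hr hr' => hK ?_⟩
  exact (Set.mem_singleton_iff.1 hr).symm.trans (Set.mem_singleton_iff.1 hr')

theorem IsBase.cyl_iterate_up {v₀ : V} (hbase : T.IsBase infty v₀) (n : ℕ) :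
    T.cyl infty ((T.up infty)^[n] v₀) = Set.univ := by
  refine Set.eq_univ_of_forall fun p => ?_
  obtain ⟨m, hm⟩ := exists_endBelow_of_ne p.2 v₀
  obtain ⟨c, hc, hcp⟩ := hm.exists_iterate m
  have : c = v₀ := hbase.eq_of_iterate_up_eq (m := 0) (j := m) (by rw [hc, Nat.zero_add])
  exact hcp.of_under ⟨n, this ▸ rfl⟩

theorem finite_desc (n : ℕ) (v : V) : {y | (T.up infty)^[n] y = v}.Finite := by
  induction n generalizing v with
  | zero => exact Set.finite_singleton v
  | succ n ih =>
    refine ((T.kids infty v).finite_toSet.biUnion fun c _ => ih c).subset fun y hy => ?_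
    have hy : (T.up infty)^[n + 1] y = v := hy
    rw [iterate_succ_apply'] at hy
    exact Set.mem_biUnion (by simpa using hy) rfl

variable (T infty) in
/-- The vertices lying exactly `n` levels below `v`. -/
noncomputable def desc (n : ℕ) (v : V) : Finset V :=
  (finite_desc (T := T) (infty := infty) n v).toFinset

theorem mem_desc {n : ℕ} {v y : V} : y ∈ T.desc infty n v ↔ (T.up infty)^[n] y = v := by
  simp [desc]

theorem IsBase.countable {v₀ : V} (hbase : T.IsBase infty v₀) : Countable V := by
  rw [← Set.countable_univ_iff]
  refine ((Set.countable_range fun n => (T.up infty)^[n] v₀).union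
    (Set.countable_iUnion fun n => (T.desc infty n v₀).countable_toSet)).mono fun v _ => ?_
  rcases hbase.exists_iterate v with ⟨n, hn⟩ | ⟨n, hn⟩
  · exact Or.inl ⟨n, hn.symm⟩
  · exact Or.inr (Set.mem_iUnion.2 ⟨n, mem_desc.2 hn⟩)

theorem IsBase.secondCountable {v₀ : V} (hbase : T.IsBase infty v₀) :
    SecondCountableTopology (JSet T infty) := by
  have := hbase.countable
  exact isTopologicalBasis_cyl.secondCountableTopology (Set.countable_range _)

theorem IsBase.borel_eq {v₀ : V} (hbase : T.IsBase infty v₀) :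
    JBorel T infty = MeasurableSpace.generateFrom (Set.range (T.cyl infty)) := by
  have := hbase.secondCountable
  exact isTopologicalBasis_cyl.borel_eq_generateFrom

theorem cyl_subset_biUnion_kids (v : V) :
    T.cyl infty v ⊆ ⋃ c ∈ T.kids infty v, T.cyl infty c := by
  intro p hp
  obtain ⟨c, hc, hcp⟩ := EndBelow.exists_kid hp
  exact Set.mem_biUnion (show c ∈ (T.kids infty v : Set V) by simpa using hc) hcp

theorem isCompact_cyl (v : V) : IsCompact (T.cyl infty v) := by
  rw [isCompact_iff_finite_subcover]
  intro ι U hU hcov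
  by_contra hbad
  set Bad : V → Prop := fun w => ¬ ∃ t : Finset ι, T.cyl infty w ⊆ ⋃ i ∈ t, U i with hBad
  have step : ∀ w : {w // Bad w}, ∃ c : {w // Bad w}, T.up infty c.1 = w.1 := by
    rintro ⟨w, hw⟩
    by_contra! hcon
    have hgood : ∀ c ∈ T.kids infty w, ∃ t : Finset ι, T.cyl infty c ⊆ ⋃ i ∈ t, U i := by
      intro c hc
      by_contra h
      exact hcon ⟨c, h⟩ (mem_kids.1 hc)
    choose! t ht using hgood
    classical
    refine hw ⟨(T.kids infty w).biUnion t, fun p hp => ?_⟩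
    obtain ⟨c, hc, hcp⟩ := Set.mem_iUnion₂.1 (cyl_subset_biUnion_kids w hp)
    obtain ⟨i, hi, hip⟩ := Set.mem_iUnion₂.1 (ht c hc hcp)
    exact Set.mem_iUnion₂.2 ⟨i, Finset.mem_biUnion.2 ⟨c, hc, hi⟩, hip⟩
  choose f hf using step
  let r : ℕ → {w // Bad w} := fun n => f^[n] ⟨v, hbad⟩
  have hr : ∀ n, T.up infty (r (n + 1)).1 = (r n).1 := fun n => by
    simp only [r, iterate_succ_apply']
    exact hf _
  obtain ⟨p, hp⟩ := exists_end_of_ray (fun n => (r n).1) hr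
  let q : JSet T infty := ⟨p, (hp 0).ne_infty⟩
  obtain ⟨i, hi⟩ := Set.mem_iUnion.1 (hcov (show q ∈ T.cyl infty v from hp 0))
  obtain ⟨w, hw, hwU⟩ := exists_cyl_subset (hU i) hi
  have hit : ∀ n, (T.up infty)^[n] (r n).1 = v := by
    intro n
    induction n with
    | zero => rfl
    | succ n ih => rw [iterate_succ_apply, hr, ih]
  have hunder : ∃ n, T.Under infty w (r n).1 := by
    rcases EndBelow.total hw (hp 0) with h | ⟨n, hn⟩
    · exact ⟨0, h⟩
    · refine ⟨n, 0, ?_⟩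
      exact EndBelow.eq_of_iterate (hp n) hw (n := n) ((hit n).trans hn.symm)
  obtain ⟨n, hn⟩ := hunder
  refine (r n).2 ⟨{i}, fun x hx => ?_⟩
  simpa using hwU (EndBelow.of_under hx hn)

theorem IsBase.compactSpace {v₀ : V} (hbase : T.IsBase infty v₀) :
    CompactSpace (JSet T infty) :=
  ⟨hbase.cyl_iterate_up 0 ▸ isCompact_cyl _⟩

end TreeDyn

namespace TreeDyn

open MeasureTheory

variable {V : Type} {T : TreeDyn V} {infty : T.G.end} {v₀ : V}

theorem measurableSet_cyl (v : V) : MeasurableSet (T.cyl infty v) :=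
  (isClopen_cyl v).2.measurableSet

theorem IsBase.measure_ext (hbase : T.IsBase infty v₀) {ν ν' : Measure (JSet T infty)}
    [IsFiniteMeasure ν] (h : ∀ v, ν (T.cyl infty v) = ν' (T.cyl infty v)) : ν = ν' := by
  refine ext_of_generate_finite _ hbase.borel_eq isPiSystem_cyl ?_ ?_
  · rintro _ ⟨v, rfl⟩
    exact h v
  · rw [← hbase.cyl_iterate_up 0]
    exact h _

theorem exists_fib_of_mem_cyl (hup : ∀ w, T.Upright infty w) {FJ : JSet T infty → JSet T infty}
    (hFJ : ∀ p v, p ∈ T.cyl infty v → FJ p ∈ T.cyl infty (T.F v)) {p : JSet T infty} {w : V}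
    (h : FJ p ∈ T.cyl infty w) : ∃ v, T.F v = w ∧ p ∈ T.cyl infty v := by
  obtain ⟨v, hv⟩ := exists_mem_cyl p
  rcases EndBelow.total (hFJ p v hv) h with ⟨j, hj⟩ | ⟨j, hj⟩
  · obtain ⟨c, rfl, hcp⟩ := EndBelow.exists_iterate hv j
    refine ⟨c, EndBelow.eq_of_iterate (hFJ p c hcp) h (n := j) ?_, hcp⟩
    rw [← F_iterate_up hup, hj]
  · refine ⟨(T.up infty)^[j] v, ?_, EndBelow.of_under hv ⟨j, rfl⟩⟩
    rw [F_iterate_up hup, hj]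

theorem eq_of_F_eq (hup : ∀ w, T.Upright infty w) {p : JSet T infty} {v w : V}
    (hv : p ∈ T.cyl infty v) (hw : p ∈ T.cyl infty w) (h : T.F v = T.F w) : v = w := by
  rcases EndBelow.total hv hw with ⟨_ | j, rfl⟩ | ⟨_ | j, rfl⟩
  · rfl
  · rw [F_iterate_up hup] at h
    exact absurd h (T.iterate_up_ne infty _ j)
  · rfl
  · rw [F_iterate_up hup] at h
    exact absurd h.symm (T.iterate_up_ne infty _ j)

theorem preimage_cyl (hup : ∀ w, T.Upright infty w) {FJ : JSet T infty → JSet T infty}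
    (hFJ : ∀ p v, p ∈ T.cyl infty v → FJ p ∈ T.cyl infty (T.F v)) (w : V) :
    FJ ⁻¹' T.cyl infty w = ⋃ v ∈ T.fib w, T.cyl infty v := by
  ext p
  simp only [Set.mem_preimage, Set.mem_iUnion, mem_fib, exists_prop]
  refine ⟨exists_fib_of_mem_cyl hup hFJ, ?_⟩
  rintro ⟨v, rfl, hv⟩
  exact hFJ p v hv

section Mass

variable {dV : V → ℕ} {dE : V → V → ℕ} {Dg : ℕ} {μ : V → ℚ}

/-- A measure with the masses prescribed by the mass function is invariant. -/
theorem IsMass.measurePreserving (hμ : T.IsMass infty v₀ dV Dg μ) (hdeg : T.IsLocalDeg dV dE)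
    (hDg : T.IsGlobalDeg dE Dg) (hbase : T.IsBase infty v₀) (hup : ∀ w, T.Upright infty w)
    (hpos : ∀ v, 0 < μ v) {FJ : JSet T infty → JSet T infty}
    (hFJ : ∀ p v, p ∈ T.cyl infty v → FJ p ∈ T.cyl infty (T.F v))
    {ν : Measure (JSet T infty)} [IsFiniteMeasure ν]
    (hν : ∀ v, ν (T.cyl infty v) = ENNReal.ofReal (μ v : ℝ)) : MeasurePreserving FJ ν ν := by
  have hmeas : Measurable FJ := by
    refine Measurable.mono (measurable_generateFrom (s := Set.range (T.cyl infty)) ?_) le_rfl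
      hbase.borel_eq.le
    rintro _ ⟨w, rfl⟩
    rw [preimage_cyl hup hFJ]
    exact Finset.measurableSet_biUnion _ fun v _ => measurableSet_cyl v
  refine ⟨hmeas, hbase.measure_ext fun w => ?_⟩
  rw [Measure.map_apply hmeas (measurableSet_cyl w), preimage_cyl hup hFJ,
    measure_biUnion_finset ?_ fun v _ => measurableSet_cyl v]
  · simp_rw [hν]
    rw [← ENNReal.ofReal_sum_of_nonneg fun v _ => by exact_mod_cast (hpos v).le,
      ← hμ.sum_fib hdeg hDg w, Rat.cast_sum]
  · intro v hv v' hv' hne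
    refine Set.disjoint_left.2 fun p hp hp' => hne (eq_of_F_eq hup hp hp' ?_)
    rw [mem_fib.1 hv, mem_fib.1 hv']

/-- A measure with the masses prescribed by the mass function has no atoms. -/
theorem IsMass.measure_singleton (hμ : T.IsMass infty v₀ dV Dg μ) (hdeg : T.IsLocalDeg dV dE)
    (hDg : T.IsGlobalDeg dE Dg) (hbase : T.IsBase infty v₀) (hup : ∀ w, T.Upright infty w)
    {k : ℕ} (hk : 0 < k) (hF : T.F v₀ = (T.up infty)^[k] v₀) {ν : Measure (JSet T infty)}
    (hν : ∀ v, ν (T.cyl infty v) = ENNReal.ofReal (μ v : ℝ)) (p : JSet T infty) :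
    ν {p} = 0 := by
  have h1 : (1 : ℝ) ≤ Dg := by exact_mod_cast globalDeg_pos infty hdeg hDg v₀
  set r : ℝ := ((Dg : ℝ) - 1) / Dg with hr
  have hr0 : 0 ≤ r := div_nonneg (by linarith) (by linarith)
  have hr1 : r < 1 := by
    rw [hr, div_lt_one (by linarith)]
    linarith
  have hp : p ∈ T.cyl infty v₀ := by
    rw [show v₀ = (T.up infty)^[0] v₀ from rfl, hbase.cyl_iterate_up 0]
    trivial
  have hle : ∀ n, ν {p} ≤ ENNReal.ofReal (r ^ n) := by
    intro n
    obtain ⟨v, hv, hvp⟩ := EndBelow.exists_iterate hp (n * k)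
    calc ν {p} ≤ ν (T.cyl infty v) := measure_mono (Set.singleton_subset_iff.2 hvp)
      _ = ENNReal.ofReal (μ v : ℝ) := hν v
      _ ≤ ENNReal.ofReal (r ^ n) := by
        refine ENNReal.ofReal_le_ofReal ?_
        have := hμ.le_pow hdeg hDg hbase hup hk hF hv
        rw [hr]
        exact_mod_cast this
  have hlim := ENNReal.tendsto_ofReal (tendsto_pow_atTop_nhds_zero_of_lt_one hr0 hr1)
  rw [ENNReal.ofReal_zero] at hlim
  exact le_antisymm (ge_of_tendsto' hlim hle) zero_le

end Mass

theorem sum_desc {μ : V → ℚ} (hsum : ∀ v, ∑ c ∈ T.kids infty v, μ c = μ v) (n : ℕ) (v : V) :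
    ∑ y ∈ T.desc infty n v, μ y = μ v := by
  classical
  induction n generalizing v with
  | zero =>
    have : T.desc infty 0 v = {v} := by
      ext y
      simp [mem_desc]
    rw [this, Finset.sum_singleton]
  | succ n ih =>
    have hmaps : ∀ y ∈ T.desc infty (n + 1) v, (T.up infty)^[n] y ∈ T.kids infty v := by
      intro y hy
      rw [mem_kids, ← iterate_succ_apply' (T.up infty), mem_desc.1 hy]
    rw [← Finset.sum_fiberwise_of_maps_to hmaps, ← hsum v]
    refine Finset.sum_congr rfl fun c hc => ?_
    rw [← ih c]
    refine Finset.sum_congr (Finset.ext fun y => ?_) fun _ _ => rfl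
    rw [Finset.mem_filter, mem_desc, mem_desc, iterate_succ_apply']
    exact ⟨fun h => h.2, fun h => ⟨h ▸ mem_kids.1 hc, h⟩⟩

/-- The approximation at depth `n` of the measure with prescribed masses: the combination of
Dirac masses at points `e y` below the vertices `y` lying `n` levels below the base. -/
noncomputable def approx (T : TreeDyn V) (infty : T.G.end) (v₀ : V) (μ : V → ℚ)
    (e : V → JSet T infty) (n : ℕ) : Measure (JSet T infty) :=
  ∑ y ∈ T.desc infty n v₀, ENNReal.ofReal (μ y : ℝ) • Measure.dirac (e y)

theorem approx_cyl {μ : V → ℚ} (hsum : ∀ v, ∑ c ∈ T.kids infty v, μ c = μ v)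
    (hpos : ∀ v, 0 < μ v) {e : V → JSet T infty} (he : ∀ v, e v ∈ T.cyl infty v) {m : ℕ} {v : V}
    (hv : (T.up infty)^[m] v = v₀) (j : ℕ) :
    approx T infty v₀ μ e (m + j) (T.cyl infty v) = ENNReal.ofReal (μ v : ℝ) := by
  classical
  have hind : ∀ y ∈ T.desc infty (m + j) v₀,
      (ENNReal.ofReal (μ y : ℝ) • Measure.dirac (e y)) (T.cyl infty v) =
        if (T.up infty)^[j] y = v then ENNReal.ofReal (μ y : ℝ) else 0 := by
    intro y hy
    have hiff : e y ∈ T.cyl infty v ↔ (T.up infty)^[j] y = v := by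
      constructor
      · intro h
        refine EndBelow.eq_of_iterate (EndBelow.of_under (he y) ⟨j, rfl⟩) h (n := m) ?_
        rw [← iterate_add_apply, mem_desc.1 hy, hv]
      · intro h
        exact EndBelow.of_under (he y) ⟨j, h⟩
    rw [Measure.smul_apply, Measure.dirac_apply' _ (measurableSet_cyl v), smul_eq_mul,
      Set.indicator_apply]
    simp [hiff]
  rw [approx, Measure.finsetSum_apply, Finset.sum_congr rfl hind, ← Finset.sum_filter,
    ← ENNReal.ofReal_sum_of_nonneg fun y _ => by exact_mod_cast (hpos y).le,
    ← sum_desc hsum j v, Rat.cast_sum]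
  congr 1
  refine Finset.sum_congr (Finset.ext fun y => ?_) fun _ _ => rfl
  rw [Finset.mem_filter, mem_desc, mem_desc, iterate_add_apply]
  exact ⟨fun h => h.2, fun h => ⟨h ▸ hv, h⟩⟩

theorem IsBase.exists_measure (hbase : T.IsBase infty v₀)
    (hval : ∀ v : V, (T.G.neighborSet v).ncard ≠ 1) {μ : V → ℚ}
    (hsum : ∀ v, ∑ c ∈ T.kids infty v, μ c = μ v) (hpos : ∀ v, 0 < μ v)
    (hray : ∀ n, μ ((T.up infty)^[n] v₀) = 1) :
    ∃ ν : Measure (JSet T infty), IsProbabilityMeasure ν ∧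
      ∀ v, ν (T.cyl infty v) = ENNReal.ofReal (μ v : ℝ) := by
  have := hbase.secondCountable
  have := hbase.compactSpace
  have hex : ∀ v, ∃ p : JSet T infty, p ∈ T.cyl infty v := fun v =>
    (exists_endBelow (infty := infty) hval v).elim fun p hp => ⟨⟨p, hp.ne_infty⟩, hp⟩
  choose e he using hex
  have hprob : ∀ n, IsProbabilityMeasure (approx T infty v₀ μ e n) := by
    intro n
    refine ⟨?_⟩
    have h := approx_cyl hsum hpos he (m := 0) (v := v₀) rfl n
    rw [Nat.zero_add, show T.cyl infty v₀ = Set.univ from hbase.cyl_iterate_up 0,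
      show μ v₀ = 1 from hray 0] at h
    simpa using h
  let P : ℕ → ProbabilityMeasure (JSet T infty) := fun n => ⟨_, hprob n⟩
  obtain ⟨ν, -, hν⟩ := isCompact_univ.ultrafilter_le_nhds
    (Ultrafilter.map P (Filter.hyperfilter ℕ)) (by simp)
  have hlim : Filter.Tendsto P (Filter.hyperfilter ℕ) (nhds ν) := hν
  refine ⟨ν, ν.2, fun v => ?_⟩
  rcases hbase.exists_iterate v with ⟨n, rfl⟩ | ⟨m, hm⟩
  · rw [hbase.cyl_iterate_up, hray]
    simp
  · have hconv := ProbabilityMeasure.tendsto_measure_of_isClopen_of_tendsto hlim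
      (isClopen_cyl (T := T) (infty := infty) v)
    have hconst : (fun n => P n (T.cyl infty v)) =ᶠ[Filter.hyperfilter ℕ]
        fun _ => (μ v : ℝ).toNNReal := by
      refine Filter.Eventually.filter_mono Nat.hyperfilter_le_atTop ?_
      filter_upwards [Filter.eventually_ge_atTop m] with n hn
      obtain ⟨j, rfl⟩ := Nat.exists_eq_add_of_le hn
      have h := approx_cyl hsum hpos he hm j
      exact congrArg ENNReal.toNNReal h
    have heq := tendsto_nhds_unique (hconv.congr' hconst) tendsto_const_nhds
    rw [← ProbabilityMeasure.ennreal_coeFn_eq_coeFn_toMeasure, heq]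
    rfl

end TreeDyn

open MeasureTheory in
/-- **The invariant measure on the Julia set.**
Let `F : T → T` be a polynomial-like branched covering with local degree
function `(dV, dE)`, global degree `Dg`, base `v₀` and mass function `μ`,
and let `FJ : J(F) → J(F)` be the induced boundary map on the Julia set
`J(F) = ∂T ∖ {infty}` (characterized by: if an end `p` lies below a vertex
`v` then `FJ p` lies below `F v`).  Then there is a unique Borel probability
measure `ν` on `J(F)` with `ν (J(F,v)) = μ v` for every vertex `v`, where
`J(F,v)` is the set of ends below `v`; moreover `ν` is invariant under `FJ`
and has no atoms. -/
theorem exists_unique_invariant_measure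
    {V : Type} (T : TreeDyn V) (infty : T.G.end)
    (hpl : T.IsPolyLike infty)
    (dV : V → ℕ) (dE : V → V → ℕ) (hdeg : T.IsLocalDeg dV dE)
    (v₀ : V) (hbase : T.IsBase infty v₀)
    (Dg : ℕ) (hDg : T.IsGlobalDeg dE Dg)
    (μ : V → ℚ) (hμ : T.IsMass infty v₀ dV Dg μ)
    (FJ : JSet T infty → JSet T infty)
    (hFJ : ∀ (p : JSet T infty) (v : V),
      T.EndBelow infty v p.val → T.EndBelow infty (T.F v) (FJ p).val) :
    (∃! ν : @Measure (JSet T infty) (JBorel T infty),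
      @IsProbabilityMeasure (JSet T infty) (JBorel T infty) ν ∧
      ∀ v : V, ν {p : JSet T infty | T.EndBelow infty v p.val} =
        ENNReal.ofReal ((μ v : ℝ))) ∧
    (∀ ν : @Measure (JSet T infty) (JBorel T infty),
      (@IsProbabilityMeasure (JSet T infty) (JBorel T infty) ν ∧
        ∀ v : V, ν {p : JSet T infty | T.EndBelow infty v p.val} =
          ENNReal.ofReal ((μ v : ℝ))) →
      ((∀ A : Set (JSet T infty),
          @MeasurableSet (JSet T infty) (JBorel T infty) A → ν (FJ ⁻¹' A) = ν A) ∧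
        (∀ p : JSet T infty, ν {p} = 0))) := by
  have hup := hpl.upright hdeg hbase hDg
  obtain ⟨k, hk, hF⟩ := hpl.exists_shift hbase hup
  have hpos := hμ.pos hdeg hDg hbase hup hk hF
  obtain ⟨ν, hprob, hν⟩ := hbase.exists_measure hpl.2.2.2.1
    (hμ.sum_kids hdeg hDg hbase hup hk hF) hpos hμ.iterate_up
  refine ⟨⟨ν, ⟨hprob, hν⟩, ?_⟩, ?_⟩
  · rintro ν' ⟨hprob', hν'⟩
    exact hbase.measure_ext fun v => (hν' v).trans (hν v).symm
  · rintro ν' ⟨hprob', hν'⟩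
    refine ⟨fun A hA => ?_, hμ.measure_singleton hdeg hDg hbase hup hk hF hν'⟩
    exact (hμ.measurePreserving hdeg hDg hbase hup hpos hFJ hν').measure_preimage
      hA.nullMeasurableSet
end

section
/- Let F : T → T be a polynomial-like branched covering of a simplicial tree, let J(F) = ∂T ∖ {∞} with the subspace topology from the space of ends, and let μ_F be the unique Borel probability measure on J(F) with μ_F(J(F,v)) = μ(v) for every vertex v, which is invariant under the induced boundary map F : J(F) → J(F). Then the measure-preserving system (F, J(F), μ_F) is ergodic: every Borel set A ⊆ J(F) with F^{−1}(A) = A has μ_F(A) ∈ {0, 1}. -/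
open SimpleGraph Function Opposite

namespace SimpleGraph

variable {V : Type} {G : SimpleGraph V}

/-- In an acyclic graph, a component of the complement of `K` containing the start of a path
contains its end exactly when the path avoids `K`. -/
theorem IsAcyclic.mem_componentCompl_iff (hG : G.IsAcyclic) {K : Set V} {C : G.ComponentCompl K}
    {x y : V} (hx : x ∈ C) {π : G.Walk x y} (hπ : π.IsPath) :
    y ∈ C ↔ ∀ z ∈ π.support, z ∉ K := by
  classical
  constructor
  · rintro ⟨hyK, rfl⟩
    obtain ⟨hxK, hxy⟩ := hx
    obtain ⟨w⟩ := ConnectedComponent.exact hxy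
    let w' : G.Walk x y := w.map (Embedding.induce Kᶜ).toHom
    have hw' : ∀ z ∈ w'.support, z ∉ K := by
      intro z hz
      obtain ⟨a, -, rfl⟩ := List.mem_map.1 ((Walk.support_map _ w) ▸ hz)
      exact a.2
    have huniq : (⟨π, hπ⟩ : G.Path x y) = w'.toPath := (hG.subsingleton_path x y).elim _ _
    have hsupp : π = w'.bypass := congrArg Subtype.val huniq
    intro z hz
    rw [hsupp] at hz
    exact hw' z (w'.support_bypass_subset_support hz)
  · intro h
    clear hπ
    induction π with
    | nil => exact hx
    | cons hadj q ih =>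
      refine ih (ComponentCompl.mem_of_adj _ _ hx (h _ ?_) hadj) fun z hz => h z ?_
      · simp
      · simp [hz]

/-- The set of vertices lying on the same side of `v` as the end `p`. -/
def endSide (p : G.end) (v : V) : Set V := (endComp p {v} : Set V)

theorem endComp_subset_endSide (p : G.end) {K : Finset V} {v : V} (hv : v ∈ K) :
    (endComp p K : Set V) ⊆ endSide p v := by
  have h : ({v} : Finset V) ⊆ K := by simpa using hv
  have hsec := p.2 (CategoryTheory.opHomOfLE h )
  have heq : (endComp p K).hom (Finset.coe_subset.2 h) = endComp p {v} := hsec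
  have := (endComp p K).subset_hom (Finset.coe_subset.2 h)
  rwa [heq] at this

theorem notMem_endSide_self (p : G.end) (v : V) : v ∉ endSide p v := fun h =>
  ComponentCompl.notMem_of_mem (C := endComp p {v}) h (by simp)

theorem mem_endSide_of_adj {p : G.end} {v x y : V} (hx : x ∈ endSide p v) (hxy : G.Adj x y)
    (hy : y ≠ v) : y ∈ endSide p v :=
  ComponentCompl.mem_of_adj (C := endComp p {v}) x y hx (by simpa using hy) hxy

theorem endComp_eq_of_mem {p q : G.end} {K : Finset V} {x : V} (hp : x ∈ endComp p K)
    (hq : x ∈ endComp q K) : endComp p K = endComp q K := by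
  by_contra h
  exact Set.disjoint_left.1 (ComponentCompl.pairwise_disjoint h) hp hq

theorem IsTree.exists_adj_mem_endSide (hG : G.IsTree) (p : G.end) (v : V) :
    ∃ w, G.Adj v w ∧ w ∈ endSide p v := by
  obtain ⟨⟨c, k⟩, hc, hk, hadj⟩ :=
    (endComp p {v}).exists_adj_boundary_pair hG.connected.preconnected ⟨v, by simp⟩
  obtain rfl : k = v := by simpa using hk
  exact ⟨c, hadj.symm, hc⟩

theorem IsAcyclic.endSide_adj_unique (hG : G.IsAcyclic) {p : G.end} {v w w' : V}
    (hw : G.Adj v w) (hw' : G.Adj v w') (hs : w ∈ endSide p v) (hs' : w' ∈ endSide p v)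
    (hreach : G.Reachable w w') : w' = w := by
  obtain ⟨q, hq⟩ := hreach.exists_isPath
  have hav := (hG.mem_componentCompl_iff (C := endComp p {v}) hs hq).1 hs'
  have hpath : (Walk.cons hw.symm Walk.nil).IsPath := by simp [hw.ne']
  have hv : v ∉ q.support := fun h => hav v h (by simp)
  have := hG.mem_support_of_ne_mem_support_of_adj_of_isPath hpath hq hw' hv
  simpa [hw'.ne'] using this

/-- Across an edge of a tree, an end lies on exactly one side. -/
theorem IsTree.mem_endSide_iff_notMem (hG : G.IsTree) (p : G.end) {v w : V} (hvw : G.Adj v w) :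
    w ∈ endSide p v ↔ v ∉ endSide p w := by
  classical
  obtain ⟨d, hd⟩ := (endComp p {v, w}).nonempty
  have hdv := endComp_subset_endSide p (show v ∈ ({v, w} : Finset V) by simp) hd
  have hdw := endComp_subset_endSide p (show w ∈ ({v, w} : Finset V) by simp) hd
  obtain ⟨π, hπ⟩ := (hG.connected d v).exists_isPath
  obtain ⟨σ, hσ⟩ := (hG.connected d w).exists_isPath
  have h1 : w ∈ endSide p v ↔ v ∉ σ.support := by
    refine (hG.isAcyclic.mem_componentCompl_iff (C := endComp p {v}) hdv hσ).trans ?_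
    simp only [Finset.coe_singleton, Set.mem_singleton_iff]
    exact ⟨fun h hv => h v hv rfl, fun h z hz hzv => h (hzv ▸ hz)⟩
  have h2 : v ∈ endSide p w ↔ w ∉ π.support := by
    refine (hG.isAcyclic.mem_componentCompl_iff (C := endComp p {w}) hdw hπ).trans ?_
    simp only [Finset.coe_singleton, Set.mem_singleton_iff]
    exact ⟨fun h hv => h w hv rfl, fun h z hz hzv => h (hzv ▸ hz)⟩
  rw [h1, h2, not_not]
  exact ⟨hG.isAcyclic.mem_support_of_ne_mem_support_of_adj_of_isPath hπ hσ hvw,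
    hG.isAcyclic.ne_mem_support_of_support_of_adj_of_isPath hπ hσ hvw⟩

/-- In a tree, the component selected by an end outside a finite set is determined by the
sides it selects at the individual vertices. -/
theorem IsTree.endComp_eq (hG : G.IsTree) {p q : G.end} {K : Finset V}
    (h : ∀ k ∈ K, endComp p {k} = endComp q {k}) : endComp p K = endComp q K := by
  obtain ⟨x, hx⟩ := (endComp p K).nonempty
  obtain ⟨y, hy⟩ := (endComp q K).nonempty
  obtain ⟨π, hπ⟩ := (hG.connected x y).exists_isPath
  refine endComp_eq_of_mem ((hG.isAcyclic.mem_componentCompl_iff hx hπ).2 ?_) hy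
  intro z hz hzK
  have hxz : x ∈ endComp p {z} := endComp_subset_endSide p hzK hx
  have hyz : y ∈ endComp p {z} := by
    rw [h z hzK]
    exact endComp_subset_endSide q hzK hy
  exact (hG.isAcyclic.mem_componentCompl_iff hxz hπ).1 hyz z hz (by simp)

end SimpleGraph

namespace TreeDyn

variable {V : Type} (T : TreeDyn V) (infty : T.G.end)

/-- The neighbour of `v` in the direction of `infty`. -/
noncomputable def parent (v : V) : V := (T.isTree.exists_adj_mem_endSide infty v).choose

theorem adj_parent (v : V) : T.G.Adj v (T.parent infty v) :=
  (T.isTree.exists_adj_mem_endSide infty v).choose_spec.1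

theorem parent_mem_endSide (v : V) : T.parent infty v ∈ endSide infty v :=
  (T.isTree.exists_adj_mem_endSide infty v).choose_spec.2

variable {T infty}

theorem endSide_adj_unique {p : T.G.end} {v w w' : V} (hw : T.G.Adj v w) (hw' : T.G.Adj v w')
    (hs : w ∈ endSide p v) (hs' : w' ∈ endSide p v) : w' = w :=
  T.isTree.isAcyclic.endSide_adj_unique hw hw' hs hs' (T.isTree.connected w w')

theorem eq_parent_of_mem_endSide {v w : V} (hw : T.G.Adj v w) (hs : w ∈ endSide infty v) :
    w = T.parent infty v :=
  endSide_adj_unique (T.adj_parent infty v) hw (T.parent_mem_endSide infty v) hs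

theorem eq_parent_or_eq_parent {v w : V} (hvw : T.G.Adj v w) :
    w = T.parent infty v ∨ v = T.parent infty w := by
  by_cases h : w ∈ endSide infty v
  · exact Or.inl (eq_parent_of_mem_endSide hvw h)
  · rw [T.isTree.mem_endSide_iff_notMem infty hvw, not_not] at h
    exact Or.inr (eq_parent_of_mem_endSide hvw.symm h)

theorem notMem_endSide_parent (v : V) : v ∉ endSide infty (T.parent infty v) :=
  (T.isTree.mem_endSide_iff_notMem infty (T.adj_parent infty v)).1 (T.parent_mem_endSide infty v)

theorem below_iff_notMem_endSide {v x : V} : T.Below infty v x ↔ x ∉ endSide infty v := by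
  constructor
  · rintro (rfl | ⟨h, hne⟩) hx
    · exact notMem_endSide_self infty x hx
    · exact hne hx.choose_spec
  · intro hx
    refine or_iff_not_imp_left.2 fun hne => ⟨by simpa using hne, fun heq => hx ⟨_, heq⟩⟩

theorem below_iff_exists_iterate {v x : V} :
    T.Below infty v x ↔ ∃ n, (T.parent infty)^[n] x = v := by
  rw [below_iff_notMem_endSide]
  constructor
  · obtain ⟨w⟩ := T.isTree.connected x v
    induction w with
    | nil => exact fun _ => ⟨0, rfl⟩
    | @cons x z v hxz w ih =>
      intro hx
      by_cases hxv : x = v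
      · exact ⟨0, hxv⟩
      obtain ⟨n, hn⟩ := ih fun hz => hx (mem_endSide_of_adj hz hxz.symm hxv)
      rcases eq_parent_or_eq_parent (infty := infty) hxz with rfl | rfl
      · exact ⟨n + 1, hn⟩
      · rcases n with - | n
        · obtain rfl : z = v := hn
          exact absurd (T.parent_mem_endSide infty z) hx
        · exact ⟨n, hn⟩
  · rintro ⟨n, rfl⟩
    induction n generalizing x with
    | zero => exact notMem_endSide_self infty x
    | succ n ih =>
      intro hx
      rw [iterate_succ_apply] at hx
      by_cases hp : T.parent infty x = (T.parent infty)^[n] (T.parent infty x)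
      · rw [← hp] at hx
        exact notMem_endSide_parent x hx
      · exact ih (mem_endSide_of_adj hx (T.adj_parent infty x) hp)

theorem iterate_parent_ne_self (v : V) (n : ℕ) : (T.parent infty)^[n + 1] v ≠ v := fun h =>
  below_iff_notMem_endSide.1 (below_iff_exists_iterate.2 ⟨n, h⟩) (T.parent_mem_endSide infty v)

theorem iterate_parent_injective (v : V) : Injective fun n => (T.parent infty)^[n] v := by
  have key : ∀ m k, (T.parent infty)^[m] v ≠ (T.parent infty)^[m + (k + 1)] v := by
    intro m k h
    rw [add_comm, iterate_add_apply] at h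
    exact iterate_parent_ne_self _ k h.symm
  intro m n h
  rcases lt_trichotomy m n with hlt | heq | hlt
  · obtain ⟨k, rfl⟩ := Nat.exists_eq_add_of_lt hlt
    exact absurd h (key m k)
  · exact heq
  · obtain ⟨k, rfl⟩ := Nat.exists_eq_add_of_lt hlt
    exact absurd h.symm (key n k)

theorem exists_iterate_parent_eq (v w : V) :
    ∃ a b, (T.parent infty)^[a] v = (T.parent infty)^[b] w := by
  obtain ⟨π⟩ := T.isTree.connected v w
  induction π with
  | nil => exact ⟨0, 0, rfl⟩
  | @cons v z w hvz π ih =>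
    obtain ⟨a, b, hab⟩ := ih
    rcases eq_parent_or_eq_parent (infty := infty) hvz with rfl | rfl
    · exact ⟨a + 1, b, hab⟩
    · refine ⟨a, b + 1, ?_⟩
      rw [← iterate_succ_apply, iterate_succ_apply', hab, iterate_succ_apply']

variable (T infty) in
/-- The signed height of `v` relative to `v₀` as seen from `infty`. -/
noncomputable def level (v₀ v : V) : ℤ :=
  (exists_iterate_parent_eq (T := T) (infty := infty) v v₀).choose_spec.choose -
    (exists_iterate_parent_eq (T := T) (infty := infty) v v₀).choose

theorem level_eq {v₀ v : V} {a b : ℕ} (h : (T.parent infty)^[a] v = (T.parent infty)^[b] v₀) :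
    T.level infty v₀ v = b - a := by
  have hE := exists_iterate_parent_eq (T := T) (infty := infty) v v₀
  obtain ⟨c, d, hcd, hl⟩ : ∃ c d : ℕ, (T.parent infty)^[c] v = (T.parent infty)^[d] v₀ ∧
      T.level infty v₀ v = d - c := ⟨_, _, hE.choose_spec.choose_spec, rfl⟩
  have : (T.parent infty)^[c + b] v₀ = (T.parent infty)^[a + d] v₀ := by
    rw [iterate_add_apply, ← h, ← iterate_add_apply, add_comm, iterate_add_apply, hcd,
      ← iterate_add_apply]
  have := iterate_parent_injective v₀ this
  rw [hl]
  omega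

theorem level_self (v₀ : V) : T.level infty v₀ v₀ = 0 := by
  simpa using level_eq (T := T) (infty := infty) (v := v₀) (a := 0) (b := 0) rfl

theorem level_parent (v₀ v : V) :
    T.level infty v₀ (T.parent infty v) = T.level infty v₀ v + 1 := by
  obtain ⟨a, b, h⟩ := exists_iterate_parent_eq (T := T) (infty := infty) v v₀
  have h' : (T.parent infty)^[a] (T.parent infty v) = (T.parent infty)^[b + 1] v₀ := by
    rw [← iterate_succ_apply, iterate_succ_apply', h, iterate_succ_apply']
  rw [level_eq h, level_eq h']
  push_cast
  ring

theorem level_iterate_parent (v₀ v : V) (n : ℕ) :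
    T.level infty v₀ ((T.parent infty)^[n] v) = T.level infty v₀ v + n := by
  induction n with
  | zero => simp
  | succ n ih =>
    rw [iterate_succ_apply', level_parent, ih]
    push_cast
    ring

theorem exists_iterate_parent_eq_of_level_eq {v₀ v w : V}
    (h : T.level infty v₀ v = T.level infty v₀ w) :
    ∃ a, (T.parent infty)^[a] v = (T.parent infty)^[a] w := by
  obtain ⟨a, b, hab⟩ := exists_iterate_parent_eq (T := T) (infty := infty) v w
  have := congrArg (T.level infty v₀) hab
  rw [level_iterate_parent, level_iterate_parent] at this
  obtain rfl : a = b := by omega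
  exact ⟨a, hab⟩

theorem countable_vertices (T : TreeDyn V) (infty : T.G.end) : Countable V := by
  obtain ⟨v₀⟩ := T.isTree.connected.nonempty
  have hfin : ∀ (a : ℕ) (w : V), {v | (T.parent infty)^[a] v = w}.Countable := by
    intro a
    induction a with
    | zero => intro w; simp
    | succ a ih =>
      intro w
      refine ((T.locFin w).countable.biUnion fun u _ => ih u).mono fun v hv => ?_
      refine Set.mem_biUnion (x := (T.parent infty)^[a] v) ?_ rfl
      have hv : (T.parent infty)^[a + 1] v = w := hv
      rw [iterate_succ_apply'] at hv
      rw [mem_neighborSet, ← hv]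
      exact (T.adj_parent infty _).symm
  rw [← Set.countable_univ_iff]
  refine (Set.countable_iUnion fun a => Set.countable_iUnion fun b =>
    hfin a ((T.parent infty)^[b] v₀)).mono fun v _ => ?_
  obtain ⟨a, b, hab⟩ := exists_iterate_parent_eq (T := T) (infty := infty) v v₀
  exact Set.mem_iUnion.2 ⟨a, Set.mem_iUnion.2 ⟨b, hab⟩⟩

theorem three_le_ncard_of_two_children {v w u : V} (hv : T.parent infty v = u)
    (hw : T.parent infty w = u) (hvw : v ≠ w) : 3 ≤ (T.G.neighborSet u).ncard := by
  have hp : ∀ x, T.parent infty x = u → x ≠ T.parent infty u := by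
    rintro x rfl hx
    exact iterate_parent_ne_self (T := T) (infty := infty) x 1 hx.symm
  have hcard : ({v, w, T.parent infty u} : Set V).ncard = 3 :=
    Set.ncard_eq_three.2 ⟨v, w, _, hvw, hp v hv, hp w hw, rfl⟩
  rw [← hcard]
  refine Set.ncard_le_ncard ?_ (T.locFin u)
  rintro x (rfl | rfl | rfl)
  · exact hv ▸ (T.adj_parent infty x).symm
  · exact hw ▸ (T.adj_parent infty x).symm
  · exact T.adj_parent infty u

/-- The vertices at nonnegative level are those of the ray from the base to `infty`. -/
theorem IsBase.exists_iterate_of_level_nonneg {v₀ v : V} (hb : T.IsBase infty v₀)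
    (hv : 0 ≤ T.level infty v₀ v) : ∃ n, v = (T.parent infty)^[n] v₀ := by
  obtain ⟨n, hn⟩ := Int.eq_ofNat_of_zero_le hv
  refine ⟨n, ?_⟩
  set w := (T.parent infty)^[n] v₀ with hw
  have hlw : T.level infty v₀ w = n := by rw [hw, level_iterate_parent, level_self, zero_add]
  obtain ⟨a, ha⟩ := exists_iterate_parent_eq_of_level_eq (hn.trans hlw.symm)
  induction a with
  | zero => exact ha
  | succ a ih =>
    by_contra hne
    have hne' : (T.parent infty)^[a] v ≠ (T.parent infty)^[a] w := fun h => hne (ih h)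
    rw [iterate_succ_apply', iterate_succ_apply'] at ha
    obtain ⟨m, hm⟩ := below_iff_exists_iterate.1
      (hb.2 _ (three_le_ncard_of_two_children rfl ha.symm hne'))
    have := congrArg (T.level infty v₀) hm
    rw [level_iterate_parent, level_parent, level_iterate_parent, level_self] at this
    omega

theorem IsBase.level_nonpos {v₀ v : V} (hb : T.IsBase infty v₀)
    (hv : 3 ≤ (T.G.neighborSet v).ncard) : T.level infty v₀ v ≤ 0 := by
  obtain ⟨m, hm⟩ := below_iff_exists_iterate.1 (hb.2 v hv)
  have := congrArg (T.level infty v₀) hm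
  rw [level_iterate_parent, level_self] at this
  omega

theorem IsMass.eq_one {v₀ v : V} {dV : V → ℕ} {Dg : ℕ} {μ : V → ℚ} (hb : T.IsBase infty v₀)
    (hμ : T.IsMass infty v₀ dV Dg μ) (hv : 0 ≤ T.level infty v₀ v) : μ v = 1 := by
  obtain ⟨n, rfl⟩ := hb.exists_iterate_of_level_nonneg hv
  refine hμ.1 _ ?_
  rw [height, if_pos (below_iff_exists_iterate.2 ⟨n, rfl⟩)]
  positivity

end TreeDyn

namespace TreeDyn

variable {V : Type} {T : TreeDyn V} {infty : T.G.end}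

theorem endBelow_iff_parent_notMem {v : V} {p : T.G.end} :
    T.EndBelow infty v p ↔ T.parent infty v ∉ endSide p v := by
  constructor
  · exact fun h hp => h (endComp_eq_of_mem hp (T.parent_mem_endSide infty v))
  · intro h heq
    have heq : endComp p {v} = endComp infty {v} := heq
    refine h ?_
    rw [endSide, heq]
    exact T.parent_mem_endSide infty v

theorem endBelow_iff_mem_endSide_parent {v : V} {p : T.G.end} :
    T.EndBelow infty v p ↔ v ∈ endSide p (T.parent infty v) := by
  rw [endBelow_iff_parent_notMem, T.isTree.mem_endSide_iff_notMem p (T.adj_parent infty v),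
    not_not]

theorem EndBelow.parent {v : V} {p : T.G.end} (h : T.EndBelow infty v p) :
    T.EndBelow infty (T.parent infty v) p := by
  intro heq
  have heq : endComp p {T.parent infty v} = endComp infty {T.parent infty v} := heq
  rw [endBelow_iff_mem_endSide_parent, endSide, heq] at h
  exact notMem_endSide_parent v h

theorem EndBelow.iterate_parent {v : V} {p : T.G.end} (h : T.EndBelow infty v p) (n : ℕ) :
    T.EndBelow infty ((T.parent infty)^[n] v) p := by
  induction n with
  | zero => exact h
  | succ n ih =>
    rw [iterate_succ_apply']
    exact ih.parent

theorem EndBelow.exists_child {v : V} {p : T.G.end} (h : T.EndBelow infty v p) :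
    ∃ y, T.parent infty y = v ∧ T.EndBelow infty y p := by
  obtain ⟨y, hvy, hy⟩ := T.isTree.exists_adj_mem_endSide p v
  rcases eq_parent_or_eq_parent (infty := infty) hvy with rfl | rfl
  · exact absurd hy (endBelow_iff_parent_notMem.1 h)
  · exact ⟨y, rfl, endBelow_iff_mem_endSide_parent.2 hy⟩

theorem EndBelow.eq_of_parent_eq {v w : V} {p : T.G.end} (hv : T.EndBelow infty v p)
    (hw : T.EndBelow infty w p) (h : T.parent infty v = T.parent infty w) : v = w := by
  rw [endBelow_iff_mem_endSide_parent] at hv hw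
  rw [← h] at hw
  exact endSide_adj_unique (h ▸ (T.adj_parent infty w).symm) (T.adj_parent infty v).symm hw hv

theorem EndBelow.eq_of_level_eq {v₀ v w : V} {p : T.G.end} (hv : T.EndBelow infty v p)
    (hw : T.EndBelow infty w p) (h : T.level infty v₀ v = T.level infty v₀ w) : v = w := by
  obtain ⟨a, ha⟩ := exists_iterate_parent_eq_of_level_eq h
  induction a with
  | zero => exact ha
  | succ a ih =>
    rw [iterate_succ_apply', iterate_succ_apply'] at ha
    exact ih ((hv.iterate_parent a).eq_of_parent_eq (hw.iterate_parent a) ha)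

theorem EndBelow.exists_iterate_eq {v₀ v w : V} {p : T.G.end} (hv : T.EndBelow infty v p)
    (hw : T.EndBelow infty w p) (h : T.level infty v₀ v ≤ T.level infty v₀ w) :
    ∃ n : ℕ, (T.parent infty)^[n] v = w ∧ T.level infty v₀ w = T.level infty v₀ v + n := by
  obtain ⟨n, hn⟩ := Int.le.dest h
  refine ⟨n, (hv.iterate_parent n).eq_of_level_eq (v₀ := v₀) hw ?_, hn.symm⟩
  rw [level_iterate_parent, hn]

/-- Two ends below a vertex lie on the same side of every vertex of higher level. -/
theorem EndBelow.endComp_eq {v₀ v k : V} {p q : T.G.end} (hp : T.EndBelow infty v p)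
    (hq : T.EndBelow infty v q) (h : T.level infty v₀ v < T.level infty v₀ k) :
    endComp p {k} = endComp q {k} := by
  have key : ∀ {p q : T.G.end}, T.EndBelow infty v p → T.EndBelow infty v q →
      T.EndBelow infty k p → endComp p {k} = endComp q {k} := by
    intro p q hp hq hk
    obtain ⟨n, rfl, hl⟩ := hp.exists_iterate_eq (v₀ := v₀) hk h.le
    obtain ⟨m, rfl⟩ : ∃ m, n = m + 1 := Nat.exists_eq_succ_of_ne_zero (by omega)
    rw [iterate_succ_apply']
    exact endComp_eq_of_mem (endBelow_iff_mem_endSide_parent.1 (hp.iterate_parent m))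
      (endBelow_iff_mem_endSide_parent.1 (hq.iterate_parent m))
  by_cases hk : T.EndBelow infty k p
  · exact key hp hq hk
  by_cases hk' : T.EndBelow infty k q
  · exact (key hq hp hk').symm
  · exact (not_not.1 hk).trans (not_not.1 hk').symm

theorem end_eq_of_endComp_eq {p q : T.G.end} (h : ∀ k, endComp p {k} = endComp q {k}) : p = q :=
  Subtype.ext (funext fun K => T.isTree.endComp_eq (K := K.unop) fun k _ => h k)

theorem exists_endBelow_level_le {p : T.G.end} (hp : p ≠ infty) (v₀ : V) (m : ℤ) :
    ∃ v, T.EndBelow infty v p ∧ T.level infty v₀ v ≤ m := by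
  obtain ⟨v, hv⟩ : ∃ v, T.EndBelow infty v p := by
    by_contra! h
    exact hp (end_eq_of_endComp_eq fun k => not_not.1 (h k))
  have key : ∀ n : ℕ, ∃ w, T.EndBelow infty w p ∧ T.level infty v₀ w + n = T.level infty v₀ v := by
    intro n
    induction n with
    | zero => exact ⟨v, hv, by simp⟩
    | succ n ih =>
      obtain ⟨w, hw, hl⟩ := ih
      obtain ⟨y, rfl, hy⟩ := hw.exists_child
      rw [level_parent] at hl
      exact ⟨y, hy, by push_cast; omega⟩
  obtain ⟨w, hw, hl⟩ := key (T.level infty v₀ v - m).toNat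
  exact ⟨w, hw, by omega⟩

theorem exists_endBelow_level_eq {p : T.G.end} (hp : p ≠ infty) (v₀ : V) (m : ℤ) :
    ∃ v, T.EndBelow infty v p ∧ T.level infty v₀ v = m := by
  obtain ⟨v, hv, hl⟩ := exists_endBelow_level_le hp v₀ m
  obtain ⟨n, hn⟩ := Int.le.dest hl
  exact ⟨_, hv.iterate_parent n, by rw [level_iterate_parent, hn]⟩

theorem isOpen_endBelow (T : TreeDyn V) (infty : T.G.end) (v : V) : @IsOpen _ (endTop T.G) {p | T.EndBelow infty v p} := by
  let K : (Finset V)ᵒᵖ := op {v}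
  let _ : ∀ K, TopologicalSpace ((componentComplFunctor T.G).obj K) := fun _ => ⊥
  have h1 : IsOpen ((fun f : ∀ K, (componentComplFunctor T.G).obj K => f K) ⁻¹' {infty.val K}ᶜ) :=
    IsOpen.preimage (continuous_apply K) trivial
  exact ⟨_, h1, rfl⟩

theorem exists_endBelow_subset {p : T.G.end} (hp : p ≠ infty) {U : Set T.G.end}
    (hU : @IsOpen _ (endTop T.G) U) (hpU : p ∈ U) :
    ∃ v, T.EndBelow infty v p ∧ ∀ q, T.EndBelow infty v q → q ∈ U := by
  classical
  obtain ⟨v₀⟩ := T.isTree.connected.nonempty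
  obtain ⟨W, hW, rfl⟩ := hU
  let _ : ∀ K, TopologicalSpace ((componentComplFunctor T.G).obj K) := fun _ => ⊥
  have hW' : IsOpen W := hW
  obtain ⟨I, u, hu, hIW⟩ := isOpen_pi_iff.1 hW' p.val hpU
  let L : Finset V := I.biUnion fun K => K.unop
  obtain ⟨m, hm⟩ := ((L.image (T.level infty v₀)).finite_toSet).bddBelow
  obtain ⟨v, hv, hl⟩ := exists_endBelow_level_le hp v₀ (m - 1)
  refine ⟨v, hv, fun q hq => hIW fun K hK => ?_⟩
  have heq : endComp q K.unop = endComp p K.unop := by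
    refine T.isTree.endComp_eq fun k hk => hq.endComp_eq (v₀ := v₀) hv ?_
    have : m ≤ T.level infty v₀ k :=
      hm (Finset.mem_image_of_mem _ (Finset.mem_biUnion.2 ⟨K, hK, hk⟩))
    omega
  have heq : q.val K = p.val K := heq
  rw [heq]
  exact (hu K hK).2

end TreeDyn

section Dynamics

open MeasureTheory

attribute [local instance] JBorel

namespace TreeDyn

variable {V : Type} {T : TreeDyn V} {infty : T.G.end}

variable (T infty) in
/-- The set of points of the Julia set lying below `v`. -/
def cylinder (v : V) : Set (JSet T infty) := {p | T.EndBelow infty v p.val}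

theorem measurableSet_cylinder (v : V) : MeasurableSet (T.cylinder infty v) :=
  MeasurableSpace.measurableSet_generateFrom ⟨_, isOpen_endBelow T infty v, rfl⟩

theorem cylinder_subset_parent (v : V) :
    T.cylinder infty v ⊆ T.cylinder infty (T.parent infty v) := fun _ hp => EndBelow.parent hp

theorem isPiSystem_range_cylinder : IsPiSystem (Set.range (T.cylinder infty)) := by
  obtain ⟨v₀⟩ := T.isTree.connected.nonempty
  rintro _ ⟨v, rfl⟩ _ ⟨w, rfl⟩ ⟨p, hv, hw⟩
  have key : ∀ {v w : V}, p ∈ T.cylinder infty v → p ∈ T.cylinder infty w →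
      T.level infty v₀ v ≤ T.level infty v₀ w → T.cylinder infty v ⊆ T.cylinder infty w := by
    intro v w hv hw hl q hq
    obtain ⟨n, rfl, -⟩ := EndBelow.exists_iterate_eq hv hw hl
    exact EndBelow.iterate_parent hq n
  rcases le_total (T.level infty v₀ v) (T.level infty v₀ w) with hl | hl
  · exact ⟨v, (Set.inter_eq_left.2 (key hv hw hl)).symm⟩
  · exact ⟨w, (Set.inter_eq_right.2 (key hw hv hl)).symm⟩

variable (T infty) in
theorem borel_eq_generateFrom_cylinder :
    JBorel T infty = MeasurableSpace.generateFrom (Set.range (T.cylinder infty)) := by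
  have := countable_vertices T infty
  apply le_antisymm
  · refine MeasurableSpace.generateFrom_le ?_
    rintro _ ⟨U, hU, rfl⟩
    have heq : (Subtype.val ⁻¹' U : Set (JSet T infty)) =
        ⋃ v ∈ {v | T.cylinder infty v ⊆ Subtype.val ⁻¹' U}, T.cylinder infty v := by
      refine subset_antisymm (fun p hp => ?_) (Set.iUnion₂_subset fun v hv => hv)
      obtain ⟨v, hv, hvU⟩ := exists_endBelow_subset p.2 hU hp
      exact Set.mem_biUnion (x := v) (fun q hq => hvU _ hq) hv
    rw [heq]
    exact MeasurableSet.biUnion (Set.to_countable _) fun v _ =>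
      MeasurableSpace.measurableSet_generateFrom ⟨v, rfl⟩
  · refine MeasurableSpace.generateFrom_le ?_
    rintro _ ⟨v, rfl⟩
    exact measurableSet_cylinder v

/-- If every vertex of a descending chain has no other child, at most one end lies below it. -/
theorem EndBelow.eq_of_unique_children {x : ℕ → V} (hx : ∀ n, T.parent infty (x (n + 1)) = x n)
    (huniq : ∀ n y, T.parent infty y = x n → y = x (n + 1)) {p q : T.G.end}
    (hp : T.EndBelow infty (x 0) p) (hq : T.EndBelow infty (x 0) q) : p = q := by
  have key : ∀ {p : T.G.end}, T.EndBelow infty (x 0) p → ∀ n, T.EndBelow infty (x n) p := by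
    intro p hp n
    induction n with
    | zero => exact hp
    | succ n ih =>
      obtain ⟨y, hy, hyp⟩ := ih.exists_child
      exact huniq n y hy ▸ hyp
  have hlev : ∀ n : ℕ, T.level infty (x 0) (x n) = -n := by
    intro n
    induction n with
    | zero => simp [level_self]
    | succ n ih =>
      have := level_parent (T := T) (infty := infty) (x 0) (x (n + 1))
      rw [hx, ih] at this
      push_cast
      omega
  refine end_eq_of_endComp_eq fun k => ?_
  let n := (1 - T.level infty (x 0) k).toNat
  refine (key hp n).endComp_eq (v₀ := x 0) (key hq n) ?_
  rw [hlev]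
  omega

theorem exists_chain_of_parent_map {v : V} (hv : T.F v = T.parent infty (T.F (T.parent infty v))) :
    ∃ x : ℕ → V, x 0 = v ∧ (∀ n, T.parent infty (x (n + 1)) = x n) ∧
      ∀ n, T.F (x (n + 1)) = T.parent infty (T.F (x n)) := by
  have step : ∀ z : {z // T.F z = T.parent infty (T.F (T.parent infty z))},
      ∃ y : {z // T.F z = T.parent infty (T.F (T.parent infty z))},
        T.parent infty y.1 = z.1 ∧ T.F y.1 = T.parent infty (T.F z.1) := by
    rintro ⟨z, hz⟩
    obtain ⟨y, hzy, hy⟩ := T.edgeSurj (T.adj_parent infty (T.F z))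
    rcases eq_parent_or_eq_parent (infty := infty) hzy with rfl | rfl
    · rw [hy] at hz
      exact absurd hz.symm (iterate_parent_ne_self (T.F z) 1)
    · exact ⟨⟨y, hy⟩, rfl, hy⟩
  choose f hf1 hf2 using step
  refine ⟨fun n => (f^[n] ⟨v, hv⟩).1, rfl, fun n => ?_, fun n => ?_⟩
  · simp only [iterate_succ_apply', hf1]
  · simp only [iterate_succ_apply', hf2]

theorem IsMass.one_div_le {v₀ y : V} {dV : V → ℕ} {Dg : ℕ} {μ : V → ℚ}
    (hb : T.IsBase infty v₀) (hμ : T.IsMass infty v₀ dV Dg μ) (hdV : 0 < dV y)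
    (hy : 0 ≤ T.level infty v₀ (T.F y)) : 0 < Dg ∧ (1 / Dg : ℚ) ≤ μ y := by
  have h := hμ.2 y
  rw [hμ.eq_one hb hy] at h
  have hDg : 0 < Dg := Nat.pos_of_ne_zero fun h0 => by simp [h0] at h
  refine ⟨hDg, ?_⟩
  have hDg' : (0 : ℚ) < Dg := by exact_mod_cast hDg
  have hdV' : (1 : ℚ) ≤ dV y := by exact_mod_cast hdV
  have hd0 : (dV y : ℚ) ≠ 0 := by positivity
  rw [div_le_iff₀ hDg']
  field_simp at h
  linarith

/-- A polynomial-like map fixes `infty`, so that it commutes with passing to the parent. -/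
theorem map_parent (hpl : T.IsPolyLike infty) {dV : V → ℕ} (hdV : ∀ v, 0 < dV v)
    {v₀ : V} (hb : T.IsBase infty v₀) {Dg : ℕ} {μ : V → ℚ} (hμ : T.IsMass infty v₀ dV Dg μ)
    (ν : Measure (JSet T infty)) [IsProbabilityMeasure ν]
    (hval : ∀ v, ν (T.cylinder infty v) = ENNReal.ofReal (μ v : ℝ)) (v : V) :
    T.F (T.parent infty v) = T.parent infty (T.F v) := by
  rcases eq_parent_or_eq_parent (infty := infty) (T.adjMap (T.adj_parent infty v)) with h | hbad
  · exact h
  exfalso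
  obtain ⟨x, -, hx, hFx⟩ := exists_chain_of_parent_map hbad
  have hlev : ∀ n : ℕ, T.level infty v₀ (T.F (x n)) = T.level infty v₀ (T.F (x 0)) + n := by
    intro n
    induction n with
    | zero => simp
    | succ n ih =>
      rw [hFx, level_parent, ih]
      push_cast
      ring
  let N := (1 - T.level infty v₀ (T.F (x 0))).toNat
  have hchild : ∀ n, N ≤ n → ∀ y, T.parent infty y = x n → 0 < Dg ∧ (1 / Dg : ℚ) ≤ μ y := by
    intro n hn y hy
    refine hμ.one_div_le hb (hdV y) ?_
    have h1 : 1 ≤ T.level infty v₀ (T.F (x n)) := by rw [hlev]; omega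
    rcases eq_parent_or_eq_parent (infty := infty) (T.adjMap (T.adj_parent infty y)) with h | h
    · rw [hy] at h
      rw [h, level_parent] at h1
      omega
    · rw [h, level_parent, hy]
      omega
  have hDg : 0 < Dg := (hchild N le_rfl _ (hx N)).1
  set ε : ENNReal := ENNReal.ofReal (1 / Dg)
  have hε : 0 < ε := ENNReal.ofReal_pos.2 (by positivity)
  have hmass : ∀ n, N ≤ n → ∀ y, T.parent infty y = x n → ε ≤ ν (T.cylinder infty y) := by
    intro n hn y hy
    rw [hval]
    have := Rat.cast_le (K := ℝ).2 (hchild n hn y hy).2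
    push_cast at this
    exact ENNReal.ofReal_le_ofReal this
  have hanti : Antitone fun n => T.cylinder infty (x n) :=
    antitone_nat_of_succ_le fun n => hx n ▸ cylinder_subset_parent (x (n + 1))
  let B : ℕ → Set (JSet T infty) := fun n => T.cylinder infty (x n) \ T.cylinder infty (x (n + 1))
  have hBdisj : Pairwise (Disjoint on B) := by
    rw [pairwise_disjoint_on]
    intro m n hmn
    exact Set.disjoint_left.2 fun p hp hp' => hp.2 (hanti hmn hp'.1)
  have hfin : {n | ε ≤ ν (B n)}.Finite := Measure.finite_const_le_meas_of_disjoint_iUnion ν hε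
    (fun n => (measurableSet_cylinder _).diff (measurableSet_cylinder _)) hBdisj
    (measure_ne_top ν _)
  obtain ⟨M, hM⟩ := hfin.bddAbove
  let L := max N (M + 1)
  have huniq : ∀ n y, T.parent infty y = x (L + n) → y = x (L + n + 1) := by
    intro n y hy
    by_contra hne
    have hmem : ε ≤ ν (B (L + n)) := by
      refine (hmass (L + n) (by omega) y hy).trans (measure_mono fun p hp => ⟨?_, fun hp' => hne ?_⟩)
      · exact hy ▸ cylinder_subset_parent y hp
      · exact EndBelow.eq_of_parent_eq hp hp' (hy.trans (hx _).symm)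
    have := hM hmem
    omega
  obtain ⟨p, hp⟩ : (T.cylinder infty (x (L + 1))).Nonempty := by
    refine nonempty_of_measure_ne_zero (μ := ν) (hε.trans_le ?_).ne'
    exact hmass L (by omega) _ (hx L)
  have hsingle : {q | T.EndBelow infty (x (L + 1)) q} = {p.val} := by
    refine Set.eq_singleton_iff_unique_mem.2 ⟨hp, fun q hq => ?_⟩
    exact EndBelow.eq_of_unique_children (x := fun n => x (L + 1 + n)) (fun n => hx _)
      (fun n y hy => by
        have := huniq (1 + n) y (by rw [hy]; congr 1; omega)
        rw [this]; congr 1; omega) hq hp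
  refine p.2 (hpl.2.2.1 p.val ?_)
  have hopen := isOpen_endBelow T infty (x (L + 1))
  rwa [hsingle] at hopen

theorem level_map (hcomm : ∀ v, T.F (T.parent infty v) = T.parent infty (T.F v)) (v₀ v : V) :
    T.level infty v₀ (T.F v) = T.level infty v₀ v + T.level infty v₀ (T.F v₀) := by
  have hsemi : Semiconj T.F (T.parent infty) (T.parent infty) := hcomm
  obtain ⟨a, b, hab⟩ := exists_iterate_parent_eq (T := T) (infty := infty) v v₀
  have h := congrArg (fun z => T.level infty v₀ (T.F z)) hab
  simp only [(hsemi.iterate_right _).eq, level_iterate_parent] at h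
  rw [level_eq hab]
  omega

theorem level_iterate_map (hcomm : ∀ v, T.F (T.parent infty v) = T.parent infty (T.F v))
    (v₀ v : V) (n : ℕ) :
    T.level infty v₀ (T.F^[n] v) = T.level infty v₀ v + n * T.level infty v₀ (T.F v₀) := by
  induction n with
  | zero => simp
  | succ n ih =>
    rw [iterate_succ_apply', level_map hcomm, ih]
    push_cast
    ring

theorem ncard_neighborSet_map_le (v : V) :
    (T.G.neighborSet (T.F v)).ncard ≤ (T.G.neighborSet v).ncard := by
  have hsub : T.G.neighborSet (T.F v) ⊆ T.F '' T.G.neighborSet v := fun w hw => T.edgeSurj hw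
  exact (Set.ncard_le_ncard hsub ((T.locFin v).image _)).trans (Set.ncard_image_le (T.locFin v))

/-- A polynomial-like map strictly raises levels. -/
theorem level_map_base_pos (hpl : T.IsPolyLike infty) {v₀ : V} (hb : T.IsBase infty v₀)
    (hcomm : ∀ v, T.F (T.parent infty v) = T.parent infty (T.F v)) :
    0 < T.level infty v₀ (T.F v₀) := by
  rcases lt_trichotomy (T.level infty v₀ (T.F v₀)) 0 with hneg | hzero | hpos
  · obtain ⟨k, hk⟩ := Int.eq_ofNat_of_zero_le (neg_nonneg.2 hneg.le)
    set u := (T.parent infty)^[k] v₀ with hu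
    have hlu : T.level infty v₀ u = k := by rw [hu, level_iterate_parent, level_self, zero_add]
    have hFu : T.level infty v₀ (T.F u) = 0 := by rw [level_map hcomm, hlu]; omega
    obtain ⟨n, hn⟩ := hb.exists_iterate_of_level_nonneg hFu.ge
    have hn0 : n = 0 := by
      rw [hn, level_iterate_parent, level_self] at hFu
      omega
    rw [hn0] at hn
    have hcard : 3 ≤ (T.G.neighborSet u).ncard := by
      refine le_trans ?_ (ncard_neighborSet_map_le u)
      rw [hn]
      exact hb.1
    have := hb.level_nonpos hcard
    omega
  · obtain ⟨w, ⟨n, m, -, -, hnm⟩, hw⟩ := hpl.2.2.2.2 (T.parent infty v₀)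
    have h := congrArg (T.level infty v₀) hnm
    have hl := hb.level_nonpos hw
    rw [level_iterate_map hcomm, level_iterate_map hcomm, hzero, level_parent, level_self] at h
    simp only [mul_zero, add_zero] at h
    omega
  · exact hpos

theorem IsLocalDeg.vertex_eq_edge {dV : V → ℕ} {dE : V → V → ℕ} (hdeg : T.IsLocalDeg dV dE)
    (hcomm : ∀ v, T.F (T.parent infty v) = T.parent infty (T.F v)) (y : V) :
    dV y = dE (T.parent infty y) y := by
  have hset : {w | T.G.Adj y w ∧ T.F w = T.F (T.parent infty y)} = {T.parent infty y} := by
    refine Set.eq_singleton_iff_unique_mem.2 ⟨⟨T.adj_parent infty y, rfl⟩, ?_⟩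
    rintro w ⟨hyw, hw⟩
    rcases eq_parent_or_eq_parent (infty := infty) hyw with h | rfl
    · exact h
    · rw [hcomm, hcomm] at hw
      exact absurd hw.symm (iterate_parent_ne_self (T.F w) 1)
  rw [hdeg.2.2.2.2 (T.adj_parent infty y), hset, finsum_mem_singleton, hdeg.1]

/-- The children of `v` mapping to a given child of `F v`. -/
theorem mem_fiber_iff_parent (hcomm : ∀ v, T.F (T.parent infty v) = T.parent infty (T.F v))
    {v c y : V} (hc : T.parent infty c = T.F v) :
    (T.G.Adj v y ∧ T.F y = c) ↔ (T.parent infty y = v ∧ T.F y = c) := by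
  refine and_congr_left fun hy => ⟨fun hvy => ?_, fun h => h ▸ (T.adj_parent infty y).symm⟩
  rcases eq_parent_or_eq_parent (infty := infty) hvy with rfl | h
  · rw [← hy, hcomm] at hc
    exact absurd hc (iterate_parent_ne_self (T.F v) 1)
  · exact h.symm

theorem IsLocalDeg.sum_children {dV : V → ℕ} {dE : V → V → ℕ} (hdeg : T.IsLocalDeg dV dE)
    (hcomm : ∀ v, T.F (T.parent infty v) = T.parent infty (T.F v)) {v c : V}
    (hc : T.parent infty c = T.F v) {S : Finset V}
    (hS : ∀ y, y ∈ S ↔ T.parent infty y = v ∧ T.F y = c) : ∑ y ∈ S, dV y = dV v := by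
  obtain ⟨w, hvw, hw⟩ := T.edgeSurj (show T.G.Adj (T.F v) c from hc ▸ (T.adj_parent infty c).symm)
  rw [hdeg.2.2.2.2 hvw, ← finsum_mem_coe_finset]
  refine finsum_mem_congr (Set.ext fun y => ?_) fun y hy => ?_
  · rw [Finset.mem_coe, hS, ← mem_fiber_iff_parent hcomm hc, ← hw]
    rfl
  · rw [Set.mem_ofPred_eq, hw, mem_fiber_iff_parent hcomm hc] at hy
    rw [hdeg.vertex_eq_edge hcomm, hy.1]

section BoundaryMap

variable {FJ : JSet T infty → JSet T infty}

theorem measurable_boundaryMap (hcomm : ∀ v, T.F (T.parent infty v) = T.parent infty (T.F v))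
    (hFJ : ∀ (p : JSet T infty) (v : V),
      T.EndBelow infty v p.val → T.EndBelow infty (T.F v) (FJ p).val) : Measurable FJ := by
  obtain ⟨v₀⟩ := T.isTree.connected.nonempty
  have hgen := borel_eq_generateFrom_cylinder T infty
  suffices h : ∀ w, MeasurableSet (FJ ⁻¹' T.cylinder infty w) by
    intro A hA
    rw [hgen] at hA
    refine MeasurableSpace.generateFrom_induction (Set.range (T.cylinder infty))
      (fun A _ => MeasurableSet (FJ ⁻¹' A)) ?_ ?_ ?_ ?_ A hA
    · rintro _ ⟨w, rfl⟩ -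
      exact h w
    · exact MeasurableSet.empty
    · exact fun A _ hA => hA.compl
    · intro s _ hs
      rw [Set.preimage_iUnion]
      exact MeasurableSet.iUnion hs
  intro w
  have heq : FJ ⁻¹' T.cylinder infty w = ⋃ u ∈ {u | T.F u = w}, T.cylinder infty u := by
    refine subset_antisymm (fun p hp => ?_) (Set.iUnion₂_subset ?_)
    · obtain ⟨u, hu, hl⟩ := exists_endBelow_level_eq p.2 v₀
        (T.level infty v₀ w - T.level infty v₀ (T.F v₀))
      refine Set.mem_biUnion (x := u) ?_ hu
      refine EndBelow.eq_of_level_eq (v₀ := v₀) (hFJ p u hu) hp ?_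
      rw [level_map hcomm, hl]
      ring
    · rintro u rfl p hp
      exact hFJ p u hp
  rw [heq]
  exact MeasurableSet.biUnion (T.finFibers w).countable fun u _ => measurableSet_cylinder u

variable {dV : V → ℕ} {dE : V → V → ℕ} {v₀ : V} {Dg : ℕ} {μ : V → ℚ}
  {ν : Measure (JSet T infty)}

theorem IsMass.measure_cylinder_map (hμ : T.IsMass infty v₀ dV Dg μ) (hdV : ∀ v, 0 < dV v)
    (hval : ∀ v, ν (T.cylinder infty v) = ENNReal.ofReal (μ v : ℝ)) (v : V) :
    (Dg : ENNReal) * ν (T.cylinder infty v) = dV v * ν (T.cylinder infty (T.F v)) := by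
  have hd : (dV v : ℚ) ≠ 0 := by exact_mod_cast (hdV v).ne'
  have h : (Dg : ℚ) * μ v = dV v * μ (T.F v) := by
    rw [hμ.2]
    field_simp
  have h' : (Dg : ℝ) * μ v = dV v * μ (T.F v) := by exact_mod_cast h
  rw [hval, hval, ← ENNReal.ofReal_natCast, ← ENNReal.ofReal_natCast,
    ← ENNReal.ofReal_mul (Nat.cast_nonneg _), ← ENNReal.ofReal_mul (Nat.cast_nonneg _), h']

theorem measure_cylinder_inter_preimage_cylinder (hdeg : T.IsLocalDeg dV dE)
    (hμ : T.IsMass infty v₀ dV Dg μ)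
    (hcomm : ∀ v, T.F (T.parent infty v) = T.parent infty (T.F v))
    (hFJ : ∀ (p : JSet T infty) (v : V),
      T.EndBelow infty v p.val → T.EndBelow infty (T.F v) (FJ p).val)
    (hval : ∀ v, ν (T.cylinder infty v) = ENNReal.ofReal (μ v : ℝ)) {v w : V} {k : ℕ}
    (hk : (T.parent infty)^[k] w = T.F v) :
    (Dg : ENNReal) * ν (T.cylinder infty v ∩ FJ ⁻¹' T.cylinder infty w) =
      dV v * ν (T.cylinder infty w) := by
  induction k generalizing v with
  | zero =>
    obtain rfl : w = T.F v := hk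
    have hsub : T.cylinder infty v ⊆ FJ ⁻¹' T.cylinder infty (T.F v) := fun p hp => hFJ p v hp
    rw [Set.inter_eq_left.2 hsub, hμ.measure_cylinder_map hdeg.2.1 hval]
  | succ k ih =>
    rw [iterate_succ_apply'] at hk
    set c := (T.parent infty)^[k] w with hc
    have hfin : {y | T.parent infty y = v ∧ T.F y = c}.Finite :=
      (T.finFibers c).subset fun y hy => hy.2
    have hS : ∀ y, y ∈ hfin.toFinset ↔ T.parent infty y = v ∧ T.F y = c := by simp
    have heq : T.cylinder infty v ∩ FJ ⁻¹' T.cylinder infty w =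
        ⋃ y ∈ hfin.toFinset, T.cylinder infty y ∩ FJ ⁻¹' T.cylinder infty w := by
      refine subset_antisymm (fun p hp => ?_) (Set.iUnion₂_subset fun y hy => ?_)
      · obtain ⟨y, hyv, hy⟩ := EndBelow.exists_child hp.1
        refine Set.mem_biUnion (x := y) ((hS y).2 ⟨hyv, ?_⟩) ⟨hy, hp.2⟩
        refine EndBelow.eq_of_parent_eq (hFJ p y hy) (EndBelow.iterate_parent hp.2 k) ?_
        rw [← hcomm, hyv, hk]
      · refine Set.inter_subset_inter_left _ ?_
        rw [← ((hS y).1 hy).1]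
        exact cylinder_subset_parent y
    rw [heq, measure_biUnion_finset, Finset.mul_sum,
      Finset.sum_congr rfl fun y hy => ih ((hS y).1 hy).2.symm, ← Finset.sum_mul,
      ← Nat.cast_sum, hdeg.sum_children hcomm hk hS]
    · intro y hy z hz hyz
      refine Set.disjoint_left.2 fun p hp hp' => hyz ?_
      exact EndBelow.eq_of_parent_eq hp.1 hp'.1
        (((hS y).1 hy).1.trans ((hS z).1 hz).1.symm)
    · exact fun y _ => (measurableSet_cylinder y).inter
        (measurable_boundaryMap hcomm hFJ (measurableSet_cylinder w))

/-- The boundary map carries `ν` below `v` to a multiple of `ν` below `F v`. -/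
theorem measure_cylinder_inter_preimage [IsProbabilityMeasure ν] (hdeg : T.IsLocalDeg dV dE)
    (hμ : T.IsMass infty v₀ dV Dg μ)
    (hcomm : ∀ v, T.F (T.parent infty v) = T.parent infty (T.F v))
    (hFJ : ∀ (p : JSet T infty) (v : V),
      T.EndBelow infty v p.val → T.EndBelow infty (T.F v) (FJ p).val)
    (hval : ∀ v, ν (T.cylinder infty v) = ENNReal.ofReal (μ v : ℝ)) (v : V)
    {A : Set (JSet T infty)} (hA : MeasurableSet A) :
    (Dg : ENNReal) * ν (T.cylinder infty v ∩ FJ ⁻¹' A) =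
      dV v * ν (T.cylinder infty (T.F v) ∩ A) := by
  have hmeas := measurable_boundaryMap hcomm hFJ
  let m₁ : Measure (JSet T infty) := (Dg : ENNReal) • (ν.restrict (T.cylinder infty v)).map FJ
  let m₂ : Measure (JSet T infty) := (dV v : ENNReal) • ν.restrict (T.cylinder infty (T.F v))
  have hm₁ : ∀ {B}, MeasurableSet B →
      m₁ B = (Dg : ENNReal) * ν (T.cylinder infty v ∩ FJ ⁻¹' B) := by
    intro B hB
    rw [Measure.smul_apply, Measure.map_apply hmeas hB, Measure.restrict_apply (hmeas hB),
      Set.inter_comm, smul_eq_mul]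
  have hm₂ : ∀ {B}, MeasurableSet B → m₂ B = dV v * ν (T.cylinder infty (T.F v) ∩ B) := by
    intro B hB
    rw [Measure.smul_apply, Measure.restrict_apply hB, Set.inter_comm, smul_eq_mul]
  have hfull : ∀ {B}, MeasurableSet B → T.cylinder infty (T.F v) ⊆ B → m₁ B = m₂ B := by
    intro B hB hsub
    have hsub' : T.cylinder infty v ⊆ FJ ⁻¹' B := fun p hp => hsub (hFJ p v hp)
    rw [hm₁ hB, hm₂ hB, Set.inter_eq_left.2 hsub, Set.inter_eq_left.2 hsub', hμ.measure_cylinder_map hdeg.2.1 hval]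
  have hfin : IsFiniteMeasure m₁ := by
    refine ⟨?_⟩
    rw [hm₁ MeasurableSet.univ]
    exact ENNReal.mul_lt_top (ENNReal.natCast_lt_top Dg) (measure_lt_top ν _)
  have hext : m₁ = m₂ := by
    refine ext_of_generate_finite _ (borel_eq_generateFrom_cylinder T infty)
      isPiSystem_range_cylinder ?_ (hfull MeasurableSet.univ (Set.subset_univ _))
    rintro _ ⟨w, rfl⟩
    have hw := measurableSet_cylinder (T := T) (infty := infty) w
    rcases Set.eq_empty_or_nonempty (T.cylinder infty (T.F v) ∩ T.cylinder infty w) with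
      hempty | ⟨p, hpv, hpw⟩
    · have hempty' : T.cylinder infty v ∩ FJ ⁻¹' T.cylinder infty w = ∅ :=
        Set.eq_empty_of_forall_notMem fun p hp =>
          Set.notMem_empty (FJ p) (hempty ▸ ⟨hFJ p v hp.1, hp.2⟩)
      rw [hm₁ hw, hm₂ hw, hempty, hempty', measure_empty, mul_zero, mul_zero]
    rcases le_total (T.level infty v₀ w) (T.level infty v₀ (T.F v)) with hl | hl
    · obtain ⟨k, hk, -⟩ := EndBelow.exists_iterate_eq hpw hpv hl
      have hsub : T.cylinder infty w ⊆ T.cylinder infty (T.F v) := fun q hq =>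
        hk ▸ EndBelow.iterate_parent hq k
      rw [hm₁ hw, hm₂ hw, Set.inter_eq_right.2 hsub,
        measure_cylinder_inter_preimage_cylinder hdeg hμ hcomm hFJ hval hk]
    · obtain ⟨k, rfl, -⟩ := EndBelow.exists_iterate_eq hpv hpw hl
      exact hfull hw fun q hq => EndBelow.iterate_parent hq k
  rw [← hm₁ hA, ← hm₂ hA, hext]

/-- Invariant sets are independent of all cylinders. -/
theorem measure_cylinder_inter_of_invariant [IsProbabilityMeasure ν] (hdeg : T.IsLocalDeg dV dE)
    (hb : T.IsBase infty v₀) (hμ : T.IsMass infty v₀ dV Dg μ)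
    (hcomm : ∀ v, T.F (T.parent infty v) = T.parent infty (T.F v))
    (hpos : 0 < T.level infty v₀ (T.F v₀))
    (hFJ : ∀ (p : JSet T infty) (v : V),
      T.EndBelow infty v p.val → T.EndBelow infty (T.F v) (FJ p).val)
    (hval : ∀ v, ν (T.cylinder infty v) = ENNReal.ofReal (μ v : ℝ))
    {A : Set (JSet T infty)} (hA : MeasurableSet A) (hinv : FJ ⁻¹' A = A) (v : V) :
    ν (T.cylinder infty v ∩ A) = ν (T.cylinder infty v) * ν A := by
  have hDg : 0 < Dg := (hμ.one_div_le hb (hdeg.2.1 v₀) hpos.le).1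
  have key : ∀ (n : ℕ) (v : V), 0 ≤ T.level infty v₀ (T.F^[n] v) →
      ν (T.cylinder infty v ∩ A) = ν (T.cylinder infty v) * ν A := by
    intro n
    induction n with
    | zero =>
      intro v hv
      have hone : ν (T.cylinder infty v) = 1 := by
        rw [hval, hμ.eq_one hb (show 0 ≤ T.level infty v₀ v from hv)]
        simp
      rw [hone, one_mul, Set.inter_comm]
      exact measure_inter_conull ((prob_compl_eq_zero_iff (measurableSet_cylinder v)).2 hone)
    | succ n ih =>
      intro v hv
      have h := measure_cylinder_inter_preimage hdeg hμ hcomm hFJ hval v hA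
      rw [hinv, ih (T.F v) hv, ← mul_assoc, ← hμ.measure_cylinder_map hdeg.2.1 hval,
        mul_assoc] at h
      exact (ENNReal.mul_right_inj (by exact_mod_cast hDg.ne') (ENNReal.natCast_ne_top Dg)).1 h
  refine key (T.level infty v₀ v).natAbs v ?_
  rw [level_iterate_map hcomm]
  nlinarith [neg_abs_le (T.level infty v₀ v), Int.natCast_natAbs (T.level infty v₀ v)]

end BoundaryMap

end TreeDyn

end Dynamics

open MeasureTheory in
/-- **Ergodicity of the invariant measure.**
Let `F : T → T` be a polynomial-like branched covering with local degree
function `(dV, dE)`, global degree `Dg`, base `v₀` and mass function `μ`;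
let `FJ` be the induced boundary map on the Julia set `J(F) = ∂T ∖ {infty}`,
and let `ν` be the Borel probability measure on `J(F)` with
`ν (J(F,v)) = μ v` for all vertices `v`, invariant under `FJ`.  Then
`(FJ, J(F), ν)` is ergodic: every Borel set `A` with `FJ⁻¹ A = A` has
measure `0` or `1`. -/
theorem invariant_measure_ergodic
    {V : Type} (T : TreeDyn V) (infty : T.G.end)
    (hpl : T.IsPolyLike infty)
    (dV : V → ℕ) (dE : V → V → ℕ) (hdeg : T.IsLocalDeg dV dE)
    (v₀ : V) (hbase : T.IsBase infty v₀)
    (Dg : ℕ) (hDg : T.IsGlobalDeg dE Dg)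
    (μ : V → ℚ) (hμ : T.IsMass infty v₀ dV Dg μ)
    (FJ : JSet T infty → JSet T infty)
    (hFJ : ∀ (p : JSet T infty) (v : V),
      T.EndBelow infty v p.val → T.EndBelow infty (T.F v) (FJ p).val)
    (ν : @Measure (JSet T infty) (JBorel T infty))
    (hprob : @IsProbabilityMeasure (JSet T infty) (JBorel T infty) ν)
    (hval : ∀ v : V, ν {p : JSet T infty | T.EndBelow infty v p.val} =
      ENNReal.ofReal ((μ v : ℝ)))
    (hinv : ∀ A : Set (JSet T infty),
      @MeasurableSet (JSet T infty) (JBorel T infty) A → ν (FJ ⁻¹' A) = ν A) :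
    ∀ A : Set (JSet T infty),
      @MeasurableSet (JSet T infty) (JBorel T infty) A → FJ ⁻¹' A = A →
        ν A = 0 ∨ ν A = 1 := by
  intro A hA hAinv
  let _ : MeasurableSpace (JSet T infty) := JBorel T infty
  have hcomm := TreeDyn.map_parent hpl hdeg.2.1 hbase hμ ν hval
  have hpos := TreeDyn.level_map_base_pos hpl hbase hcomm
  have hext : ν.restrict A = ν A • ν := by
    refine ext_of_generate_finite _ (TreeDyn.borel_eq_generateFrom_cylinder T infty)
      TreeDyn.isPiSystem_range_cylinder ?_ (by simp)
    rintro _ ⟨v, rfl⟩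
    rw [Measure.restrict_apply (TreeDyn.measurableSet_cylinder v), Measure.smul_apply,
      smul_eq_mul, mul_comm]
    exact TreeDyn.measure_cylinder_inter_of_invariant hdeg hbase hμ hcomm hpos hFJ hval hA hAinv v
  have hsq := congrArg (fun m => m A) hext
  simp only [Measure.restrict_apply_self, Measure.smul_apply, smul_eq_mul] at hsq
  by_cases h0 : ν A = 0
  · exact Or.inl h0
  · exact Or.inr (ENNReal.mul_eq_left h0 (measure_ne_top ν A) |>.1 hsq.symm)
end
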